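/- arXiv:2111.00371 — 9 statements merged into one kernel-verified Lean document; each statement's English description precedes it below -/
import Mathlib

section
/- Let (A, μ, α, β) be a unitary BiHom-associative algebra, and let ψ, ω : A → A be linear maps with ψ(ab) = ψ(a)ψ(b), ω(ab) = ω(a)ω(b), ψ(1_A) = ω(1_A) = 1_A, such that α, β, ψ, ω are bijective and pairwise commuting. Suppose (r, s) is an associative BiHom-Yang-Baxter pair of weight (λ, γ) in (A, μ, α, β) such that r and s are each α-, β-, ψ-, and ω-invariant. Define R, S : A → A by R(a) = β²ψ(r¹)·(α⁻¹β⁻¹(a)·αω(r²)) and S(a) = β²ψ(s¹)·(α⁻¹β⁻¹(a)·αω(s²)), and ξ, ζ : A⊗A → A by ξ(a⊗b) = λR(ab), ζ(a⊗b) = γS(ab). Then (A, R, S, α, β, ξ, ζ) is a double curved Rota-Baxter BiHom-system. -/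
open TensorProduct

section Defs

variable {K A : Type*} [Field K] [NonUnitalNonAssocRing A] [Module K A]
  [SMulCommClass K A A] [IsScalarTower K A A]

/-- `r₁₂s₂₃ = α(r¹) ⊗ r²s¹ ⊗ β(s²)`, as a linear map on `(A⊗A)⊗(A⊗A)`. -/
noncomputable def m1223 (α β : A →ₗ[K] A) :
    (A ⊗[K] A) ⊗[K] (A ⊗[K] A) →ₗ[K] A ⊗[K] (A ⊗[K] A) :=
  TensorProduct.map α (TensorProduct.map (LinearMap.mul' K A) β) ∘ₗ
    TensorProduct.map LinearMap.id (TensorProduct.assoc K A A A).symm.toLinearMap ∘ₗ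
    (TensorProduct.assoc K A A (A ⊗[K] A)).toLinearMap

/-- `r₁₃s₁₂ = ω(r¹)s¹ ⊗ β(s²) ⊗ αψ(r²)`. -/
noncomputable def m1312 (α β ψ ω : A →ₗ[K] A) :
    (A ⊗[K] A) ⊗[K] (A ⊗[K] A) →ₗ[K] A ⊗[K] (A ⊗[K] A) :=
  TensorProduct.map (LinearMap.mul' K A ∘ₗ TensorProduct.map ω LinearMap.id)
      ((TensorProduct.comm K A A).toLinearMap ∘ₗ TensorProduct.map (α ∘ₗ ψ) β) ∘ₗ
    (TensorProduct.tensorTensorTensorComm K A A A A).toLinearMap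

/-- `r₂₃s₁₃ = βω(s¹) ⊗ α(r¹) ⊗ r²ψ(s²)`. -/
noncomputable def m2313 (α β ψ ω : A →ₗ[K] A) :
    (A ⊗[K] A) ⊗[K] (A ⊗[K] A) →ₗ[K] A ⊗[K] (A ⊗[K] A) :=
  (TensorProduct.assoc K A A A).toLinearMap ∘ₗ
    TensorProduct.map ((TensorProduct.comm K A A).toLinearMap ∘ₗ TensorProduct.map α (β ∘ₗ ω))
      (LinearMap.mul' K A ∘ₗ TensorProduct.map LinearMap.id ψ) ∘ₗ
    (TensorProduct.tensorTensorTensorComm K A A A A).toLinearMap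

/-- `r₁₃ = ω(r¹) ⊗ 1 ⊗ ψ(r²)` (unitary case, with unit `e`). -/
noncomputable def t13 (ψ ω : A →ₗ[K] A) (e : A) :
    A ⊗[K] A →ₗ[K] A ⊗[K] (A ⊗[K] A) :=
  TensorProduct.map ω (TensorProduct.mk K A A e ∘ₗ ψ)

/-- The operator `a ↦ β²ψ(r¹)·(α⁻¹β⁻¹(a)·αω(r²))` attached to `r ∈ A⊗A`. -/
noncomputable def rbOp (α β ψ ω : A ≃ₗ[K] A) (r : A ⊗[K] A) (a : A) : A :=
  LinearMap.mul' K A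
    (TensorProduct.map ((β.toLinearMap ∘ₗ β.toLinearMap) ∘ₗ ψ.toLinearMap)
      (LinearMap.mulLeft K (α.symm (β.symm a)) ∘ₗ (α.toLinearMap ∘ₗ ω.toLinearMap)) r)

end Defs

/-!
Put `a ∘ b = α⁻¹(a) β⁻¹(b)`, so that `ab = α(a) ∘ β(b)`. This product is associative with left unit
`1_A`, and `α, β, ψ, ω` are endomorphisms of it. Invariance of the tensors removes the twists:
`R(a) = ψ(r¹) ∘ a ∘ ω(r²)`, and applying `ψ² ⊗ ψω ⊗ ω²` to the BiHom-Yang-Baxter equations turns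
them into the ordinary associative Yang-Baxter equations for `(ψ ⊗ ω)(r)` and `(ψ ⊗ ω)(s)`.
Evaluating these through `u ⊗ v ⊗ w ↦ u ∘ x ∘ v ∘ y ∘ w` gives the Rota-Baxter identities at
`x = α(a)`, `y = β(b)`.
-/

section Sandwich

variable {R A : Type*} [CommSemiring R] [AddCommMonoid A] [Module R A] (m : A →ₗ[R] A →ₗ[R] A)

/-- The operator `x ↦ t¹ ∘ (x ∘ t²)` attached to `t ∈ A ⊗ A`, for a bilinear product `∘ = m`. -/
def sandwich : A ⊗[R] A →ₗ[R] A →ₗ[R] A :=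
  TensorProduct.lift ((LinearMap.llcomp R A A A ∘ₗ m).compl₂ m.flip)

@[simp]
theorem sandwich_tmul (u v x : A) : sandwich m (u ⊗ₜ v) x = m u (m x v) := rfl

/-- The evaluation `u ⊗ v ⊗ w ↦ u ∘ (x ∘ (v ∘ (y ∘ w)))` of three-fold tensors, which turns
Yang-Baxter equations into Rota-Baxter identities. -/
def doubleSandwich (x y : A) : A ⊗[R] (A ⊗[R] A) →ₗ[R] A :=
  TensorProduct.lift (m.compl₂ (m x ∘ₗ (sandwich m).flip y))

@[simp]
theorem doubleSandwich_tmul (x y u : A) (t : A ⊗[R] A) :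
    doubleSandwich m x y (u ⊗ₜ t) = m u (m x (sandwich m t y)) := rfl

/-- The product `t₁₃u₁₂ = t¹ ∘ u¹ ⊗ u² ⊗ t²` of an untwisted algebra, for `∘ = m`. -/
def mul₁₃₁₂ : (A ⊗[R] A) ⊗[R] (A ⊗[R] A) →ₗ[R] A ⊗[R] (A ⊗[R] A) :=
  TensorProduct.map (TensorProduct.lift m) (TensorProduct.comm R A A).toLinearMap ∘ₗ
    (TensorProduct.tensorTensorTensorComm R A A A A).toLinearMap

@[simp]
theorem mul₁₃₁₂_tmul (a b c d : A) :
    mul₁₃₁₂ m ((a ⊗ₜ b) ⊗ₜ (c ⊗ₜ d)) = m a c ⊗ₜ[R] (d ⊗ₜ[R] b) := rfl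

/-- The product `t₁₂u₂₃ = t¹ ⊗ t² ∘ u¹ ⊗ u²` of an untwisted algebra, for `∘ = m`. -/
def mul₁₂₂₃ : (A ⊗[R] A) ⊗[R] (A ⊗[R] A) →ₗ[R] A ⊗[R] (A ⊗[R] A) :=
  ((TensorProduct.lift m).rTensor A ∘ₗ (TensorProduct.assoc R A A A).symm.toLinearMap).lTensor A ∘ₗ
    (TensorProduct.assoc R A A (A ⊗[R] A)).toLinearMap

@[simp]
theorem mul₁₂₂₃_tmul (a b c d : A) :
    mul₁₂₂₃ m ((a ⊗ₜ b) ⊗ₜ (c ⊗ₜ d)) = a ⊗ₜ[R] (m b c ⊗ₜ[R] d) := rfl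

/-- The product `t₂₃u₁₃ = u¹ ⊗ t¹ ⊗ t² ∘ u²` of an untwisted algebra, for `∘ = m`. -/
def mul₂₃₁₃ : (A ⊗[R] A) ⊗[R] (A ⊗[R] A) →ₗ[R] A ⊗[R] (A ⊗[R] A) :=
  (TensorProduct.assoc R A A A).toLinearMap ∘ₗ
    TensorProduct.map (TensorProduct.comm R A A).toLinearMap (TensorProduct.lift m) ∘ₗ
    (TensorProduct.tensorTensorTensorComm R A A A A).toLinearMap

@[simp]
theorem mul₂₃₁₃_tmul (a b c d : A) :
    mul₂₃₁₃ m ((a ⊗ₜ b) ⊗ₜ (c ⊗ₜ d)) = c ⊗ₜ[R] (a ⊗ₜ[R] m b d) := rfl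

variable {m}

theorem map_sandwich {f : A →ₗ[R] A} (hf : ∀ a b, f (m a b) = m (f a) (f b)) (t : A ⊗[R] A)
    (x : A) : f (sandwich m t x) = sandwich m (TensorProduct.map f f t) (f x) := by
  induction t with
  | zero => simp
  | add t t' ht ht' => simp [ht, ht']
  | tmul u v => simp [hf]

variable (hassoc : ∀ a b c, m (m a b) c = m a (m b c))
include hassoc

theorem doubleSandwich_mul₁₃₁₂ (x y : A) (t u : A ⊗[R] A) :
    doubleSandwich m x y (mul₁₃₁₂ m (t ⊗ₜ u)) = sandwich m t (m (sandwich m u x) y) := by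
  induction t with
  | zero => simp
  | add t t' ht ht' => simp [add_tmul, ht, ht']
  | tmul a b =>
    induction u with
    | zero => simp
    | add u u' hu hu' => simp only [tmul_add, map_add, LinearMap.add_apply, hu, hu']
    | tmul c d => simp [hassoc]

theorem doubleSandwich_mul₁₂₂₃ (x y : A) (t u : A ⊗[R] A) :
    doubleSandwich m x y (mul₁₂₂₃ m (t ⊗ₜ u)) = m (sandwich m t x) (sandwich m u y) := by
  induction t with
  | zero => simp
  | add t t' ht ht' => simp [add_tmul, ht, ht']
  | tmul a b =>
    induction u with
    | zero => simp
    | add u u' hu hu' => simp only [tmul_add, map_add, LinearMap.add_apply, hu, hu']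
    | tmul c d => simp [hassoc]

theorem doubleSandwich_mul₂₃₁₃ (x y : A) (t u : A ⊗[R] A) :
    doubleSandwich m x y (mul₂₃₁₃ m (t ⊗ₜ u)) = sandwich m u (m x (sandwich m t y)) := by
  induction u with
  | zero => simp
  | add u u' hu hu' => simp [tmul_add, hu, hu']
  | tmul a b =>
    induction t with
    | zero => simp
    | add t t' ht ht' => simp only [add_tmul, map_add, LinearMap.add_apply, ht, ht']
    | tmul c d => simp [hassoc]

theorem doubleSandwich_lTensor_mk {e : A} (hel : ∀ a, m e a = a) (x y : A) (t : A ⊗[R] A) :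
    doubleSandwich m x y ((TensorProduct.mk R A A e).lTensor A t) = sandwich m t (m x y) := by
  induction t with
  | zero => simp
  | add t t' ht ht' => simp [ht, ht']
  | tmul a b => simp [hassoc, hel]

end Sandwich

section YangBaxter

variable {R A : Type*} [CommRing R] [AddCommGroup A] [Module R A]

/-- The associative Yang-Baxter equation `p₁₃r₁₂ - p₁₂p₂₃ + s₂₃p₁₃ = -c p₁₃` for the product `m`
with left unit `e`. An associative Yang-Baxter pair `(r, s)` is a solution of it for both `p = r`
and `p = s`. -/
def IsYangBaxterTriple (m : A →ₗ[R] A →ₗ[R] A) (e : A) (c : R) (p r s : A ⊗[R] A) : Prop :=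
  mul₁₃₁₂ m (p ⊗ₜ r) - mul₁₂₂₃ m (p ⊗ₜ p) + mul₂₃₁₃ m (s ⊗ₜ p) =
    (-c) • (TensorProduct.mk R A A e).lTensor A p

theorem IsYangBaxterTriple.sandwich_mul_sandwich {m : A →ₗ[R] A →ₗ[R] A} {e : A} {c : R}
    {p r s : A ⊗[R] A} (h : IsYangBaxterTriple m e c p r s)
    (hassoc : ∀ a b c, m (m a b) c = m a (m b c)) (hel : ∀ a, m e a = a) (x y : A) :
    m (sandwich m p x) (sandwich m p y) =
      sandwich m p (m (sandwich m r x) y) + sandwich m p (m x (sandwich m s y)) +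
        c • sandwich m p (m x y) := by
  have key := congrArg (doubleSandwich m x y) h
  rw [map_add, map_sub, map_smul, doubleSandwich_mul₁₃₁₂ hassoc, doubleSandwich_mul₁₂₂₃ hassoc,
    doubleSandwich_mul₂₃₁₃ hassoc, doubleSandwich_lTensor_mk hassoc hel, neg_smul,
    sub_add_eq_add_sub, sub_eq_iff_eq_add] at key
  rw [key]
  abel

end YangBaxter

section Invariant

variable {R A : Type*} [CommSemiring R] [AddCommMonoid A] [Module R A]
  {f g h k : A →ₗ[R] A} {t : A ⊗[R] A}

/-- The tensor `t` is `f`-invariant: `(f ⊗ f)(t) = t`. -/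
def IsInvariantTensor (f : A →ₗ[R] A) (t : A ⊗[R] A) : Prop :=
  TensorProduct.map f f t = t

theorem IsInvariantTensor.comp (hf : IsInvariantTensor f t) (hg : IsInvariantTensor g t) :
    IsInvariantTensor (f ∘ₗ g) t := by
  rw [IsInvariantTensor, TensorProduct.map_comp, LinearMap.comp_apply, hg, hf]

theorem IsInvariantTensor.map_comp_comp (hf : IsInvariantTensor f t) :
    TensorProduct.map (h ∘ₗ f) (k ∘ₗ f) t = TensorProduct.map h k t := by
  rw [TensorProduct.map_comp, LinearMap.comp_apply, hf]

theorem IsInvariantTensor.map_eq_map (hf : IsInvariantTensor f t) {h' k' : A →ₗ[R] A}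
    (hh : ∀ a, h' a = h (f a)) (hk : ∀ a, k' a = k (f a)) :
    TensorProduct.map h' k' t = TensorProduct.map h k t := by
  obtain rfl : h' = h ∘ₗ f := LinearMap.ext hh
  obtain rfl : k' = k ∘ₗ f := LinearMap.ext hk
  exact hf.map_comp_comp

theorem IsInvariantTensor.map_of_comm (hf : IsInvariantTensor f t) (hh : ∀ a, f (h a) = h (f a))
    (hk : ∀ a, f (k a) = k (f a)) : IsInvariantTensor f (TensorProduct.map h k t) := by
  rw [IsInvariantTensor, ← LinearMap.comp_apply, ← TensorProduct.map_comp]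
  exact hf.map_eq_map hh hk

end Invariant

section Untwist

variable {R A : Type*} [CommSemiring R] [NonUnitalNonAssocSemiring A] [Module R A]
  [SMulCommClass R A A] [IsScalarTower R A A] {α β : A ≃ₗ[R] A} {f : A →ₗ[R] A}

/-- The untwisted product `a ∘ b = α⁻¹(a) β⁻¹(b)`, which undoes the Yau twist `ab = α(a) ∘ β(b)`. -/
def untwistedMul (α β : A ≃ₗ[R] A) : A →ₗ[R] A →ₗ[R] A :=
  (LinearMap.mul R A).compl₁₂ α.symm.toLinearMap β.symm.toLinearMap

theorem mul_eq_untwistedMul (a b : A) : a * b = untwistedMul α β (α a) (β b) := by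
  simp [untwistedMul]

/-- Endomorphisms of the BiHom-algebra `(A, ·, α, β)`, such as `α`, `β`, `ψ` and `ω`. -/
structure IsBiHomEnd (α β : A ≃ₗ[R] A) (f : A →ₗ[R] A) : Prop where
  map_mul : ∀ a b, f (a * b) = f a * f b
  comm_left : ∀ a, α (f a) = f (α a)
  comm_right : ∀ a, β (f a) = f (β a)

theorem IsBiHomEnd.map_untwistedMul (hf : IsBiHomEnd α β f) (a b : A) :
    f (untwistedMul α β a b) = untwistedMul α β (f a) (f b) := by
  obtain ⟨a, rfl⟩ := α.surjective a
  obtain ⟨b, rfl⟩ := β.surjective b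
  rw [← mul_eq_untwistedMul, hf.map_mul, mul_eq_untwistedMul (α := α) (β := β), hf.comm_left,
    hf.comm_right]

theorem untwistedMul_assoc (hα : IsBiHomEnd α β α.toLinearMap)
    (hβ : IsBiHomEnd α β β.toLinearMap) (hassoc : ∀ a b c, α a * (b * c) = (a * b) * β c)
    (a b c : A) :
    untwistedMul α β (untwistedMul α β a b) c = untwistedMul α β a (untwistedMul α β b c) := by
  obtain ⟨a, rfl⟩ := (α.trans α).surjective a
  obtain ⟨b, rfl⟩ := (β.trans α).surjective b
  obtain ⟨c, rfl⟩ := (β.trans β).surjective c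
  have hαm := hα.map_untwistedMul
  have hβm := hβ.map_untwistedMul
  have hαβ := hβ.comm_left
  have h := hassoc a b c
  simp only [mul_eq_untwistedMul (α := α) (β := β), LinearEquiv.coe_coe] at hαm hβm hαβ h
  simp only [LinearEquiv.trans_apply]
  rw [hαm, hβm, ← hαβ] at h
  exact h.symm

theorem untwistedMul_one_left {e : A} (hαe : α e = e) (hel : ∀ a, e * a = β a) (a : A) :
    untwistedMul α β e a = a := by
  obtain ⟨a, rfl⟩ := β.surjective a
  simpa only [mul_eq_untwistedMul (α := α) (β := β), hαe] using hel a

/-- The operator `R(a) = β²ψ(t¹) · (α⁻¹β⁻¹(a) · αω(t²))`, as a linear map in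
`a` and for linear endomorphisms `ψ` and `ω`. -/
def rotaBaxterOp (α β : A ≃ₗ[R] A) (ψ ω : A →ₗ[R] A) (t : A ⊗[R] A) : A →ₗ[R] A :=
  sandwich (LinearMap.mul R A)
      (TensorProduct.map (β.toLinearMap ∘ₗ β.toLinearMap ∘ₗ ψ) (α.toLinearMap ∘ₗ ω) t) ∘ₗ
    α.symm.toLinearMap ∘ₗ β.symm.toLinearMap

variable {ψ ω : A →ₗ[R] A} {t : A ⊗[R] A}

theorem rotaBaxterOp_eq_sandwich (hβ : IsBiHomEnd α β β.toLinearMap) (hψ : IsBiHomEnd α β ψ)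
    (hω : IsBiHomEnd α β ω) (htα : IsInvariantTensor α.toLinearMap t)
    (htβ : IsInvariantTensor β.toLinearMap t) :
    rotaBaxterOp α β ψ ω t = sandwich (untwistedMul α β) (TensorProduct.map ψ ω t) := by
  rw [← (htα.comp (htβ.comp htβ)).map_comp_comp]
  have hβm := hβ.map_untwistedMul
  have hαβ := hβ.comm_left
  simp only [LinearEquiv.coe_coe] at hβm hαβ
  ext a
  clear htα htβ
  induction t with
  | zero => simp [rotaBaxterOp]
  | add t t' ht ht' => simpa [rotaBaxterOp] using congrArg₂ (· + ·) ht ht'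
  | tmul u v =>
    simp [rotaBaxterOp, mul_eq_untwistedMul (α := α) (β := β), hβm, hαβ, hψ.comm_left,
      hψ.comm_right, hω.comm_left, hω.comm_right]

theorem rotaBaxterOp_comm (hβ : IsBiHomEnd α β β.toLinearMap) (hψ : IsBiHomEnd α β ψ)
    (hω : IsBiHomEnd α β ω) (htα : IsInvariantTensor α.toLinearMap t)
    (htβ : IsInvariantTensor β.toLinearMap t) (hf : IsBiHomEnd α β f) (hfψ : ∀ a, f (ψ a) = ψ (f a))
    (hfω : ∀ a, f (ω a) = ω (f a)) (htf : IsInvariantTensor f t) (a : A) :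
    rotaBaxterOp α β ψ ω t (f a) = f (rotaBaxterOp α β ψ ω t a) := by
  rw [rotaBaxterOp_eq_sandwich hβ hψ hω htα htβ, map_sandwich hf.map_untwistedMul,
    htf.map_of_comm hfψ hfω]

end Untwist

section BiHomYangBaxter

variable {K A : Type*} [Field K] [NonUnitalNonAssocRing A] [Module K A]
  [SMulCommClass K A A] [IsScalarTower K A A]

theorem rbOp_eq_rotaBaxterOp (α β ψ ω : A ≃ₗ[K] A) (t : A ⊗[K] A) :
    rbOp α β ψ ω t = rotaBaxterOp α β ψ.toLinearMap ω.toLinearMap t := by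
  ext a
  induction t with
  | zero => simp [rbOp, rotaBaxterOp]
  | add t t' ht ht' => simpa [rbOp, rotaBaxterOp] using congrArg₂ (· + ·) ht ht'
  | tmul u v => simp [rbOp, rotaBaxterOp]

section Legs

variable {m : A →ₗ[K] A →ₗ[K] A} {α β : A →ₗ[K] A} (hm : ∀ a b, a * b = m (α a) (β b))
  (ψ ω F G H : A →ₗ[K] A)
include hm

theorem map_comp_m1312 (hF : ∀ a b, F (m a b) = m (F a) (F b)) :
    TensorProduct.map F (TensorProduct.map G H) ∘ₗ m1312 α β ψ ω =
      mul₁₃₁₂ m ∘ₗ TensorProduct.map (TensorProduct.map (F ∘ₗ α ∘ₗ ω) (H ∘ₗ α ∘ₗ ψ))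
        (TensorProduct.map (F ∘ₗ β) (G ∘ₗ β)) := by
  ext a b c d
  simp [m1312, hm, hF]

theorem map_comp_m1223 (hG : ∀ a b, G (m a b) = m (G a) (G b)) :
    TensorProduct.map F (TensorProduct.map G H) ∘ₗ m1223 α β =
      mul₁₂₂₃ m ∘ₗ TensorProduct.map (TensorProduct.map (F ∘ₗ α) (G ∘ₗ α))
        (TensorProduct.map (G ∘ₗ β) (H ∘ₗ β)) := by
  ext a b c d
  simp [m1223, hm, hG]

theorem map_comp_m2313 (hH : ∀ a b, H (m a b) = m (H a) (H b)) :
    TensorProduct.map F (TensorProduct.map G H) ∘ₗ m2313 α β ψ ω =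
      mul₂₃₁₃ m ∘ₗ TensorProduct.map (TensorProduct.map (G ∘ₗ α) (H ∘ₗ α))
        (TensorProduct.map (F ∘ₗ β ∘ₗ ω) (H ∘ₗ β ∘ₗ ψ)) := by
  ext a b c d
  simp [m2313, hm, hH]

end Legs

omit [SMulCommClass K A A] [IsScalarTower K A A] in
theorem map_comp_t13 (ψ ω F G H : A →ₗ[K] A) {e : A} (hG : G e = e) :
    TensorProduct.map F (TensorProduct.map G H) ∘ₗ t13 ψ ω e =
      (TensorProduct.mk K A A e).lTensor A ∘ₗ TensorProduct.map (F ∘ₗ ω) (H ∘ₗ ψ) := by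
  ext a b
  simp [t13, hG]

/-- The BiHom-Yang-Baxter equation `p₁₃r₁₂ - p₁₂p₂₃ + s₂₃p₁₃ = -c p₁₃`. An associative
BiHom-Yang-Baxter pair `(r, s)` of weight `(λ, γ)` is a solution of it for `p = r`, `c = λ` and for
`p = s`, `c = γ`. -/
def IsBiHomYangBaxterTriple (α β ψ ω : A →ₗ[K] A) (e : A) (c : K) (p r s : A ⊗[K] A) : Prop :=
  m1312 α β ψ ω (p ⊗ₜ[K] r) - m1223 α β (p ⊗ₜ[K] p) + m2313 α β ψ ω (s ⊗ₜ[K] p) =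
    (-c) • t13 ψ ω e p

variable {α β : A ≃ₗ[K] A} {ψ ω : A →ₗ[K] A} {e : A} {c : K} {p r s : A ⊗[K] A}

theorem IsBiHomYangBaxterTriple.untwist
    (h : IsBiHomYangBaxterTriple α.toLinearMap β.toLinearMap ψ ω e c p r s)
    (hψ : IsBiHomEnd α β ψ) (hω : IsBiHomEnd α β ω) (hψω : ∀ a, ψ (ω a) = ω (ψ a))
    (hψe : ψ e = e) (hωe : ω e = e)
    (hpα : IsInvariantTensor α.toLinearMap p) (hpβ : IsInvariantTensor β.toLinearMap p)
    (hpψ : IsInvariantTensor ψ p) (hpω : IsInvariantTensor ω p)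
    (hrβ : IsInvariantTensor β.toLinearMap r) (hrψ : IsInvariantTensor ψ r)
    (hsα : IsInvariantTensor α.toLinearMap s) (hsω : IsInvariantTensor ω s) :
    IsYangBaxterTriple (untwistedMul α β) e c (TensorProduct.map ψ ω p) (TensorProduct.map ψ ω r)
      (TensorProduct.map ψ ω s) := by
  have hm := mul_eq_untwistedMul (α := α) (β := β)
  have hψm := hψ.map_untwistedMul
  have hωm := hω.map_untwistedMul
  have hψα := hψ.comm_left
  have hψβ := hψ.comm_right
  have hωα := hω.comm_left
  have hωβ := hω.comm_right
  let Φ := TensorProduct.map (ψ ∘ₗ ψ) (TensorProduct.map (ψ ∘ₗ ω) (ω ∘ₗ ω))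
  have h1312 : Φ (m1312 α.toLinearMap β.toLinearMap ψ ω (p ⊗ₜ r)) =
      mul₁₃₁₂ (untwistedMul α β) (TensorProduct.map ψ ω p ⊗ₜ TensorProduct.map ψ ω r) := by
    refine (LinearMap.congr_fun (map_comp_m1312 hm ψ ω _ _ _ (by simp [hψm])) (p ⊗ₜ r)).trans
      (congrArg (mul₁₃₁₂ _) (congrArg₂ (· ⊗ₜ ·) ((hpψ.comp (hpω.comp hpα)).map_eq_map ?_ ?_)
        ((hrψ.comp hrβ).map_eq_map ?_ ?_)))
    all_goals simp [hψω, hψα, hωα]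
  have h1223 : Φ (m1223 α.toLinearMap β.toLinearMap (p ⊗ₜ p)) =
      mul₁₂₂₃ (untwistedMul α β) (TensorProduct.map ψ ω p ⊗ₜ TensorProduct.map ψ ω p) := by
    refine (LinearMap.congr_fun (map_comp_m1223 hm _ _ _ (by simp [hψm, hωm])) (p ⊗ₜ p)).trans
      (congrArg (mul₁₂₂₃ _) (congrArg₂ (· ⊗ₜ ·) ((hpψ.comp hpα).map_eq_map ?_ ?_)
        ((hpω.comp hpβ).map_eq_map ?_ ?_)))
    all_goals simp [hψω]
  have h2313 : Φ (m2313 α.toLinearMap β.toLinearMap ψ ω (s ⊗ₜ p)) =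
      mul₂₃₁₃ (untwistedMul α β) (TensorProduct.map ψ ω s ⊗ₜ TensorProduct.map ψ ω p) := by
    refine (LinearMap.congr_fun (map_comp_m2313 hm ψ ω _ _ _ (by simp [hωm])) (s ⊗ₜ p)).trans
      (congrArg (mul₂₃₁₃ _) (congrArg₂ (· ⊗ₜ ·) ((hsω.comp hsα).map_eq_map ?_ ?_)
        ((hpψ.comp (hpω.comp hpβ)).map_eq_map ?_ ?_)))
    all_goals simp [hψω, hψβ, hωβ]
  have h13 : Φ (t13 ψ ω e p) =
      (TensorProduct.mk K A A e).lTensor A (TensorProduct.map ψ ω p) := by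
    refine (LinearMap.congr_fun (map_comp_t13 ψ ω _ _ _ (by simp [hψe, hωe])) p).trans
      (congrArg _ ((hpψ.comp hpω).map_eq_map ?_ ?_))
    all_goals simp [hψω]
  have key := congrArg Φ h
  rwa [map_add, map_sub, map_smul, h1312, h1223, h2313, h13] at key

theorem IsBiHomYangBaxterTriple.rotaBaxterOp_mul_rotaBaxterOp
    (h : IsBiHomYangBaxterTriple α.toLinearMap β.toLinearMap ψ ω e c p r s)
    (hα : IsBiHomEnd α β α.toLinearMap) (hβ : IsBiHomEnd α β β.toLinearMap)
    (hassoc : ∀ a b c, α a * (b * c) = (a * b) * β c) (hαe : α e = e) (hel : ∀ a, e * a = β a)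
    (hψ : IsBiHomEnd α β ψ) (hω : IsBiHomEnd α β ω) (hψω : ∀ a, ψ (ω a) = ω (ψ a))
    (hψe : ψ e = e) (hωe : ω e = e)
    (hpα : IsInvariantTensor α.toLinearMap p) (hpβ : IsInvariantTensor β.toLinearMap p)
    (hpψ : IsInvariantTensor ψ p) (hpω : IsInvariantTensor ω p)
    (hrα : IsInvariantTensor α.toLinearMap r) (hrβ : IsInvariantTensor β.toLinearMap r)
    (hrψ : IsInvariantTensor ψ r)
    (hsα : IsInvariantTensor α.toLinearMap s) (hsβ : IsInvariantTensor β.toLinearMap s)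
    (hsω : IsInvariantTensor ω s) (a b : A) :
    rotaBaxterOp α β ψ ω p a * rotaBaxterOp α β ψ ω p b =
      rotaBaxterOp α β ψ ω p (rotaBaxterOp α β ψ ω r a * b) +
        rotaBaxterOp α β ψ ω p (a * rotaBaxterOp α β ψ ω s b) +
        c • rotaBaxterOp α β ψ ω p (a * b) := by
  have hpα_comm := rotaBaxterOp_comm hβ hψ hω hpα hpβ hα hψ.comm_left hω.comm_left hpα a
  have hpβ_comm := rotaBaxterOp_comm hβ hψ hω hpα hpβ hβ hψ.comm_right hω.comm_right hpβ b
  have hrα_comm := rotaBaxterOp_comm hβ hψ hω hrα hrβ hα hψ.comm_left hω.comm_left hrα a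
  have hsβ_comm := rotaBaxterOp_comm hβ hψ hω hsα hsβ hβ hψ.comm_right hω.comm_right hsβ b
  simp only [LinearEquiv.coe_coe] at hpα_comm hpβ_comm hrα_comm hsβ_comm
  simp only [mul_eq_untwistedMul (α := α) (β := β), ← hpα_comm, ← hpβ_comm, ← hrα_comm, ← hsβ_comm]
  rw [rotaBaxterOp_eq_sandwich hβ hψ hω hpα hpβ, rotaBaxterOp_eq_sandwich hβ hψ hω hrα hrβ,
    rotaBaxterOp_eq_sandwich hβ hψ hω hsα hsβ]
  exact (h.untwist hψ hω hψω hψe hωe hpα hpβ hpψ hpω hrβ hrψ hsα hsω).sandwich_mul_sandwich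
    (untwistedMul_assoc hα hβ hassoc) (untwistedMul_one_left hαe hel) (α a) (β b)

end BiHomYangBaxter

theorem stmt0_general {K A : Type*} [Field K] [NonUnitalNonAssocRing A] [Module K A]
    [SMulCommClass K A A] [IsScalarTower K A A]
    {α β : A ≃ₗ[K] A} {ψ ω : A →ₗ[K] A} {e : A} {r s : A ⊗[K] A} {lam gam : K}
    (hα : IsBiHomEnd α β α.toLinearMap) (hβ : IsBiHomEnd α β β.toLinearMap)
    (hassoc : ∀ a b c, α a * (b * c) = (a * b) * β c) (hαe : α e = e) (hel : ∀ a, e * a = β a)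
    (hψ : IsBiHomEnd α β ψ) (hω : IsBiHomEnd α β ω) (hψω : ∀ a, ψ (ω a) = ω (ψ a))
    (hψe : ψ e = e) (hωe : ω e = e)
    (hrα : IsInvariantTensor α.toLinearMap r) (hrβ : IsInvariantTensor β.toLinearMap r)
    (hrψ : IsInvariantTensor ψ r) (hrω : IsInvariantTensor ω r)
    (hsα : IsInvariantTensor α.toLinearMap s) (hsβ : IsInvariantTensor β.toLinearMap s)
    (hsψ : IsInvariantTensor ψ s) (hsω : IsInvariantTensor ω s)
    (hr : IsBiHomYangBaxterTriple α.toLinearMap β.toLinearMap ψ ω e lam r r s)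
    (hs : IsBiHomYangBaxterTriple α.toLinearMap β.toLinearMap ψ ω e gam s r s) :
    (∀ a, rotaBaxterOp α β ψ ω r (α a) = α (rotaBaxterOp α β ψ ω r a)) ∧
    (∀ a, rotaBaxterOp α β ψ ω r (β a) = β (rotaBaxterOp α β ψ ω r a)) ∧
    (∀ a, rotaBaxterOp α β ψ ω s (α a) = α (rotaBaxterOp α β ψ ω s a)) ∧
    (∀ a, rotaBaxterOp α β ψ ω s (β a) = β (rotaBaxterOp α β ψ ω s a)) ∧
    (∀ a b, rotaBaxterOp α β ψ ω r a * rotaBaxterOp α β ψ ω r b =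
      rotaBaxterOp α β ψ ω r (rotaBaxterOp α β ψ ω r a * b) +
        rotaBaxterOp α β ψ ω r (a * rotaBaxterOp α β ψ ω s b) +
        lam • rotaBaxterOp α β ψ ω r (a * b)) ∧
    (∀ a b, rotaBaxterOp α β ψ ω s a * rotaBaxterOp α β ψ ω s b =
      rotaBaxterOp α β ψ ω s (rotaBaxterOp α β ψ ω r a * b) +
        rotaBaxterOp α β ψ ω s (a * rotaBaxterOp α β ψ ω s b) +
        gam • rotaBaxterOp α β ψ ω s (a * b)) :=
  ⟨rotaBaxterOp_comm hβ hψ hω hrα hrβ hα hψ.comm_left hω.comm_left hrα,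
    rotaBaxterOp_comm hβ hψ hω hrα hrβ hβ hψ.comm_right hω.comm_right hrβ,
    rotaBaxterOp_comm hβ hψ hω hsα hsβ hα hψ.comm_left hω.comm_left hsα,
    rotaBaxterOp_comm hβ hψ hω hsα hsβ hβ hψ.comm_right hω.comm_right hsβ,
    hr.rotaBaxterOp_mul_rotaBaxterOp hα hβ hassoc hαe hel hψ hω hψω hψe hωe
      hrα hrβ hrψ hrω hrα hrβ hrψ hsα hsβ hsω,
    hs.rotaBaxterOp_mul_rotaBaxterOp hα hβ hassoc hαe hel hψ hω hψω hψe hωe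
      hsα hsβ hsψ hsω hrα hrβ hrψ hsα hsβ hsω⟩

/-- Theorem 2.5: an associative BiHom-Yang-Baxter pair `(r, s)` of
weight `(λ, γ)` in a unitary BiHom-associative algebra, with `r, s` invariant under
the bijective pairwise-commuting maps `α, β, ψ, ω`, yields a double curved
Rota-Baxter BiHom-system `(A, R, S, α, β, ξ, ζ)` with
`R(a) = β²ψ(r¹)(α⁻¹β⁻¹(a)·αω(r²))`, `S(a) = β²ψ(s¹)(α⁻¹β⁻¹(a)·αω(s²))`,
`ξ(a⊗b) = λR(ab)`, `ζ(a⊗b) = γS(ab)`. -/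
theorem stmt0 {K A : Type*} [Field K] [NonUnitalNonAssocRing A] [Module K A]
    [SMulCommClass K A A] [IsScalarTower K A A]
    (α β ψ ω : A ≃ₗ[K] A) (e : A) (r s : A ⊗[K] A) (lam gam : K)
    -- BiHom-associative algebra axioms for (A, ·, α, β)
    (hαmul : ∀ a b, α (a * b) = α a * α b)
    (hβmul : ∀ a b, β (a * b) = β a * β b)
    (hassoc : ∀ a b c, α a * (b * c) = (a * b) * β c)
    -- ψ, ω multiplicative
    (hψmul : ∀ a b, ψ (a * b) = ψ a * ψ b)
    (hωmul : ∀ a b, ω (a * b) = ω a * ω b)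
    -- α, β, ψ, ω pairwise commute
    (hαβ : ∀ a, α (β a) = β (α a)) (hαψ : ∀ a, α (ψ a) = ψ (α a))
    (hαω : ∀ a, α (ω a) = ω (α a)) (hβψ : ∀ a, β (ψ a) = ψ (β a))
    (hβω : ∀ a, β (ω a) = ω (β a)) (hψω : ∀ a, ψ (ω a) = ω (ψ a))
    -- unit axioms
    (hαe : α e = e) (hβe : β e = e) (hψe : ψ e = e) (hωe : ω e = e)
    (her : ∀ a, a * e = α a) (hel : ∀ a, e * a = β a)
    -- r, s are α-, β-, ψ-, ω-invariant
    (hrα : TensorProduct.map α.toLinearMap α.toLinearMap r = r)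
    (hrβ : TensorProduct.map β.toLinearMap β.toLinearMap r = r)
    (hrψ : TensorProduct.map ψ.toLinearMap ψ.toLinearMap r = r)
    (hrω : TensorProduct.map ω.toLinearMap ω.toLinearMap r = r)
    (hsα : TensorProduct.map α.toLinearMap α.toLinearMap s = s)
    (hsβ : TensorProduct.map β.toLinearMap β.toLinearMap s = s)
    (hsψ : TensorProduct.map ψ.toLinearMap ψ.toLinearMap s = s)
    (hsω : TensorProduct.map ω.toLinearMap ω.toLinearMap s = s)
    -- (r, s) is an abhYBp of weight (λ, γ):
    -- r₁₃r₁₂ − r₁₂r₂₃ + s₂₃r₁₃ = −λ·r₁₃ and s₁₃r₁₂ − s₁₂s₂₃ + s₂₃s₁₃ = −γ·s₁₃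
    (hYB1 : m1312 α.toLinearMap β.toLinearMap ψ.toLinearMap ω.toLinearMap (r ⊗ₜ[K] r)
        - m1223 α.toLinearMap β.toLinearMap (r ⊗ₜ[K] r)
        + m2313 α.toLinearMap β.toLinearMap ψ.toLinearMap ω.toLinearMap (s ⊗ₜ[K] r)
      = (-lam) • t13 ψ.toLinearMap ω.toLinearMap e r)
    (hYB2 : m1312 α.toLinearMap β.toLinearMap ψ.toLinearMap ω.toLinearMap (s ⊗ₜ[K] r)
        - m1223 α.toLinearMap β.toLinearMap (s ⊗ₜ[K] s)
        + m2313 α.toLinearMap β.toLinearMap ψ.toLinearMap ω.toLinearMap (s ⊗ₜ[K] s)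
      = (-gam) • t13 ψ.toLinearMap ω.toLinearMap e s) :
    -- conclusion: (A, R, S, α, β, ξ, ζ) is a double curved Rota-Baxter BiHom-system
    IsLinearMap K (rbOp α β ψ ω r) ∧ IsLinearMap K (rbOp α β ψ ω s) ∧
    (∀ a, rbOp α β ψ ω r (α a) = α (rbOp α β ψ ω r a)) ∧
    (∀ a, rbOp α β ψ ω r (β a) = β (rbOp α β ψ ω r a)) ∧
    (∀ a, rbOp α β ψ ω s (α a) = α (rbOp α β ψ ω s a)) ∧
    (∀ a, rbOp α β ψ ω s (β a) = β (rbOp α β ψ ω s a)) ∧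
    (∀ a b, rbOp α β ψ ω r a * rbOp α β ψ ω r b =
      rbOp α β ψ ω r (rbOp α β ψ ω r a * b) + rbOp α β ψ ω r (a * rbOp α β ψ ω s b)
        + lam • rbOp α β ψ ω r (a * b)) ∧
    (∀ a b, rbOp α β ψ ω s a * rbOp α β ψ ω s b =
      rbOp α β ψ ω s (rbOp α β ψ ω r a * b) + rbOp α β ψ ω s (a * rbOp α β ψ ω s b)
        + gam • rbOp α β ψ ω s (a * b)) := by
  simp only [rbOp_eq_rotaBaxterOp]
  exact ⟨LinearMap.isLinear _, LinearMap.isLinear _, stmt0_general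
    ⟨hαmul, fun _ ↦ rfl, fun a ↦ (hαβ a).symm⟩ ⟨hβmul, hαβ, fun _ ↦ rfl⟩ hassoc hαe hel
    ⟨hψmul, hαψ, hβψ⟩ ⟨hωmul, hαω, hβω⟩ hψω hψe hωe hrα hrβ hrψ hrω hsα hsβ hsψ hsω hYB1 hYB2⟩
end

section
/- Let (A, R, S, α, β, ξ, ζ) be a double curved Rota-Baxter BiHom-system and define a∗b = R(a)b + aS(b) for all a, b ∈ A. Then the operation ∗ satisfies the BiHom-associativity law (a∗b)∗β(c) = α(a)∗(b∗c) for all a, b, c ∈ A (so that (A, ∗, α, β) is a BiHom-associative algebra) if and only if α(a)·ζ(b⊗c) = ξ(a⊗b)·β(c) for all a, b, c ∈ A, where · denotes the original multiplication of A. -/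
open TensorProduct

/-- The product `a ∗ b = R(a)·b + a·S(b)` associated to a double curved
Rota-Baxter BiHom-system. -/
def bstar {K A : Type*} [Field K] [NonUnitalNonAssocRing A] [Module K A]
    [SMulCommClass K A A] [IsScalarTower K A A]
    (R S : A →ₗ[K] A) (a b : A) : A :=
  R a * b + a * S b

/-!
Adding `ξ(a, b)β(c)` to `(a ∗ b) ∗ β(c)` turns `R(a ∗ b)β(c)` into `(R(a)R(b))β(c)`, and adding
`α(a)ζ(b, c)` to `α(a) ∗ (b ∗ c)` turns `α(a)S(b ∗ c)` into `α(a)(S(b)S(c))`. The resulting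
three-term sums agree summand by summand by BiHom-associativity, so the failure of `∗` to be
BiHom-associative is exactly `α(a)ζ(b, c) - ξ(a, b)β(c)`.
-/

section DoubleRotaBaxter

variable {A : Type*} [NonUnitalNonAssocSemiring A] {α β R S : A → A} {ξ ζ : A → A → A}

/-- The product `a ∗ b = R(a)b + aS(b)` induced by a double Rota-Baxter pair `(R, S)`. Unlike
`bstar`, it involves no scalars, and `R` and `S` are arbitrary maps. -/
def rotaBaxterMul (R S : A → A) (a b : A) : A :=
  R a * b + a * S b

theorem rotaBaxterMul_rotaBaxterMul_left_add (hSβ : ∀ a, S (β a) = β (S a))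
    (hR : ∀ a b, R a * R b = R (rotaBaxterMul R S a b) + ξ a b) (a b c : A) :
    rotaBaxterMul R S (rotaBaxterMul R S a b) (β c) + ξ a b * β c =
      R a * R b * β c + R a * b * β (S c) + a * S b * β (S c) := by
  calc rotaBaxterMul R S (rotaBaxterMul R S a b) (β c) + ξ a b * β c
      = (R (rotaBaxterMul R S a b) + ξ a b) * β c + rotaBaxterMul R S a b * S (β c) := by
        rw [rotaBaxterMul, add_mul, add_right_comm]
    _ = R a * R b * β c + rotaBaxterMul R S a b * β (S c) := by rw [← hR, hSβ]
    _ = R a * R b * β c + R a * b * β (S c) + a * S b * β (S c) := by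
        rw [rotaBaxterMul, add_mul, add_assoc]

theorem rotaBaxterMul_rotaBaxterMul_right_add (hRα : ∀ a, R (α a) = α (R a))
    (hS : ∀ a b, S a * S b = S (rotaBaxterMul R S a b) + ζ a b) (a b c : A) :
    rotaBaxterMul R S (α a) (rotaBaxterMul R S b c) + α a * ζ b c =
      α (R a) * (R b * c) + α (R a) * (b * S c) + α a * (S b * S c) := by
  calc rotaBaxterMul R S (α a) (rotaBaxterMul R S b c) + α a * ζ b c
      = R (α a) * rotaBaxterMul R S b c + α a * (S (rotaBaxterMul R S b c) + ζ b c) := by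
        rw [rotaBaxterMul, mul_add, add_assoc]
    _ = α (R a) * rotaBaxterMul R S b c + α a * (S b * S c) := by rw [← hS, hRα]
    _ = α (R a) * (R b * c) + α (R a) * (b * S c) + α a * (S b * S c) := by
        rw [rotaBaxterMul, mul_add]

theorem rotaBaxterMul_biHomAssoc_add (hassoc : ∀ a b c, α a * (b * c) = a * b * β c)
    (hRα : ∀ a, R (α a) = α (R a)) (hSβ : ∀ a, S (β a) = β (S a))
    (hR : ∀ a b, R a * R b = R (rotaBaxterMul R S a b) + ξ a b)
    (hS : ∀ a b, S a * S b = S (rotaBaxterMul R S a b) + ζ a b) (a b c : A) :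
    rotaBaxterMul R S (rotaBaxterMul R S a b) (β c) + ξ a b * β c =
      rotaBaxterMul R S (α a) (rotaBaxterMul R S b c) + α a * ζ b c := by
  simp only [rotaBaxterMul_rotaBaxterMul_left_add hSβ hR,
    rotaBaxterMul_rotaBaxterMul_right_add hRα hS, hassoc]

theorem stmt3_general [IsCancelAdd A] (hassoc : ∀ a b c, α a * (b * c) = a * b * β c)
    (hRα : ∀ a, R (α a) = α (R a)) (hSβ : ∀ a, S (β a) = β (S a))
    (hR : ∀ a b, R a * R b = R (rotaBaxterMul R S a b) + ξ a b)
    (hS : ∀ a b, S a * S b = S (rotaBaxterMul R S a b) + ζ a b) :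
    (∀ a b c, rotaBaxterMul R S (rotaBaxterMul R S a b) (β c) =
        rotaBaxterMul R S (α a) (rotaBaxterMul R S b c)) ↔
      ∀ a b c, α a * ζ b c = ξ a b * β c := by
  refine forall₃_congr fun a b c ↦ ?_
  have key := rotaBaxterMul_biHomAssoc_add hassoc hRα hSβ hR hS a b c
  constructor <;> intro h
  · rw [h] at key
    exact (add_left_cancel key).symm
  · rw [h] at key
    exact add_right_cancel key

end DoubleRotaBaxter

/-- Lemma 3.7(1): for a double curved Rota-Baxter BiHom-system
`(A, R, S, α, β, ξ, ζ)`, the product `a∗b = R(a)b + aS(b)` is BiHom-associative iff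
`α(a)ζ(b⊗c) = ξ(a⊗b)β(c)` for all `a, b, c`. -/
theorem stmt3 {K A : Type*} [Field K] [NonUnitalNonAssocRing A] [Module K A]
    [SMulCommClass K A A] [IsScalarTower K A A]
    (α β R S : A →ₗ[K] A) (ξ ζ : A ⊗[K] A →ₗ[K] A)
    -- BiHom-associative algebra axioms for (A, ·, α, β)
    (hαβ : ∀ a, α (β a) = β (α a))
    (hαmul : ∀ a b, α (a * b) = α a * α b)
    (hβmul : ∀ a b, β (a * b) = β a * β b)
    (hassoc : ∀ a b c, α a * (b * c) = (a * b) * β c)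
    -- R, S commute with α and β
    (hRα : ∀ a, R (α a) = α (R a)) (hRβ : ∀ a, R (β a) = β (R a))
    (hSα : ∀ a, S (α a) = α (S a)) (hSβ : ∀ a, S (β a) = β (S a))
    -- double curved Rota-Baxter BiHom-system identities
    (hR : ∀ a b, R a * R b = R (R a * b) + R (a * S b) + ξ (a ⊗ₜ[K] b))
    (hS : ∀ a b, S a * S b = S (R a * b) + S (a * S b) + ζ (a ⊗ₜ[K] b)) :
    (∀ a b c, bstar R S (bstar R S a b) (β c) = bstar R S (α a) (bstar R S b c)) ↔
      (∀ a b c, α a * ζ (b ⊗ₜ[K] c) = ξ (a ⊗ₜ[K] b) * β c) :=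
  stmt3_general (ξ := fun a b ↦ ξ (a ⊗ₜ[K] b)) (ζ := fun a b ↦ ζ (a ⊗ₜ[K] b)) hassoc hRα hSβ
    (by simpa [rotaBaxterMul] using hR) (by simpa [rotaBaxterMul] using hS)
end

section
/- Let (A, μ, α, β) be a BiHom-associative algebra and T : A⊗A → A⊗A a double curved weak BiHom-pseudotwistor with weak companion 𝔗 and curvatures ξ, ζ. Then the multiplication μ∘T satisfies the BiHom-associativity law: (μ∘T)∘(α⊗(μ∘T)) = (μ∘T)∘((μ∘T)⊗β) as maps A⊗A⊗A → A. -/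
open TensorProduct

section BiHomAssociativity

variable {R A : Type*} [CommSemiring R]

/-- The BiHom-associativity law `μ ∘ (α ⊗ μ) = μ ∘ (μ ⊗ β)` for a bilinear multiplication `μ` with
structure maps `α` and `β`. Both sides are maps out of `A ⊗ (A ⊗ A)`, so the right-hand side is
precomposed with the inverse associator. -/
def IsBiHomAssociative [AddCommMonoid A] [Module R A] (μ : A ⊗[R] A →ₗ[R] A) (α β : A →ₗ[R] A) :
    Prop :=
  μ ∘ₗ map α μ = μ ∘ₗ map μ β ∘ₗ (TensorProduct.assoc R A A A).symm.toLinearMap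

theorem isBiHomAssociative_iff_forall_tmul [AddCommMonoid A] [Module R A]
    {μ : A ⊗[R] A →ₗ[R] A} {α β : A →ₗ[R] A} :
    IsBiHomAssociative μ α β ↔
      ∀ a b c, μ (α a ⊗ₜ μ (b ⊗ₜ c)) = μ (μ (a ⊗ₜ b) ⊗ₜ β c) := by
  refine ⟨fun h a b c ↦ ?_, fun h ↦ ext_threefold' h⟩
  exact LinearMap.congr_fun h (a ⊗ₜ (b ⊗ₜ c))

variable [AddCommGroup A] [Module R A]

/-- `T` is a double curved weak BiHom-pseudotwistor for the multiplication `μ` with structure maps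
`α` and `β`, with weak companion `𝔗` and curvatures `ξ` and `ζ`. The triple tensor power is
encoded as `A ⊗ (A ⊗ A)`. -/
structure IsDoubleCurvedWeakBiHomPseudotwistor (μ : A ⊗[R] A →ₗ[R] A) (α β : A →ₗ[R] A)
    (T : A ⊗[R] A →ₗ[R] A ⊗[R] A) (𝔗 : A ⊗[R] (A ⊗[R] A) →ₗ[R] A ⊗[R] (A ⊗[R] A))
    (ξ ζ : A ⊗[R] A →ₗ[R] A) : Prop where
  curvature_eq :
    μ ∘ₗ map α ζ = μ ∘ₗ map ξ β ∘ₗ (TensorProduct.assoc R A A A).symm.toLinearMap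
  twist_right : T ∘ₗ map α (μ ∘ₗ T) = map α μ ∘ₗ 𝔗 - map α ζ
  twist_left :
    T ∘ₗ map (μ ∘ₗ T) β ∘ₗ (TensorProduct.assoc R A A A).symm.toLinearMap =
      map μ β ∘ₗ (TensorProduct.assoc R A A A).symm.toLinearMap ∘ₗ 𝔗 -
        map ξ β ∘ₗ (TensorProduct.assoc R A A A).symm.toLinearMap

theorem stmt7_general {μ : A ⊗[R] A →ₗ[R] A} {α β : A →ₗ[R] A} {T : A ⊗[R] A →ₗ[R] A ⊗[R] A}
    {𝔗 : A ⊗[R] (A ⊗[R] A) →ₗ[R] A ⊗[R] (A ⊗[R] A)} {ξ ζ : A ⊗[R] A →ₗ[R] A}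
    (hμ : IsBiHomAssociative μ α β)
    (hT : IsDoubleCurvedWeakBiHomPseudotwistor μ α β T 𝔗 ξ ζ) :
    IsBiHomAssociative (μ ∘ₗ T) α β := by
  let assocInv := (TensorProduct.assoc R A A A).symm.toLinearMap
  calc
    μ ∘ₗ (T ∘ₗ map α (μ ∘ₗ T)) = (μ ∘ₗ map α μ) ∘ₗ 𝔗 - μ ∘ₗ map α ζ := by
      rw [hT.twist_right, LinearMap.comp_sub, LinearMap.comp_assoc]
    _ = (μ ∘ₗ map μ β ∘ₗ assocInv) ∘ₗ 𝔗 - μ ∘ₗ map ξ β ∘ₗ assocInv := by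
      rw [hμ, hT.curvature_eq]
    _ = μ ∘ₗ (T ∘ₗ map (μ ∘ₗ T) β ∘ₗ assocInv) := by
      rw [hT.twist_left, LinearMap.comp_sub]
      rfl

end BiHomAssociativity

/-- Proposition 2.13: if `T : A⊗A → A⊗A` is a double curved weak
BiHom-pseudotwistor on a BiHom-associative algebra `(A, μ, α, β)`, with weak
companion `𝔗` and curvatures `ξ, ζ`, then `μ∘T` is BiHom-associative, i.e.
`(μ∘T)∘(α⊗(μ∘T)) = (μ∘T)∘((μ∘T)⊗β)` as maps `A⊗A⊗A → A`. -/
theorem stmt7 {K A : Type*} [Field K] [NonUnitalNonAssocRing A] [Module K A]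
    [SMulCommClass K A A] [IsScalarTower K A A]
    (α β : A →ₗ[K] A)
    (T : A ⊗[K] A →ₗ[K] A ⊗[K] A)
    (TT : A ⊗[K] (A ⊗[K] A) →ₗ[K] A ⊗[K] (A ⊗[K] A))
    (ξ ζ : A ⊗[K] A →ₗ[K] A)
    -- BiHom-associative algebra axioms for (A, ·, α, β)
    (hαβ : ∀ a, α (β a) = β (α a))
    (hαmul : ∀ a b, α (a * b) = α a * α b)
    (hβmul : ∀ a b, β (a * b) = β a * β b)
    (hassoc : ∀ a b c, α a * (b * c) = (a * b) * β c)
    -- μ∘(α⊗ζ) = μ∘(ξ⊗β)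
    (hcurv : LinearMap.mul' K A ∘ₗ TensorProduct.map α ζ =
      LinearMap.mul' K A ∘ₗ TensorProduct.map ξ β ∘ₗ
        (TensorProduct.assoc K A A A).symm.toLinearMap)
    -- T∘(α⊗(μ∘T)) = (α⊗μ)∘𝔗 − α⊗ζ
    (hT1 : T ∘ₗ TensorProduct.map α (LinearMap.mul' K A ∘ₗ T) =
      TensorProduct.map α (LinearMap.mul' K A) ∘ₗ TT - TensorProduct.map α ζ)
    -- T∘((μ∘T)⊗β) = (μ⊗β)∘𝔗 − ξ⊗β
    (hT2 : T ∘ₗ TensorProduct.map (LinearMap.mul' K A ∘ₗ T) β ∘ₗ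
        (TensorProduct.assoc K A A A).symm.toLinearMap =
      TensorProduct.map (LinearMap.mul' K A) β ∘ₗ
          (TensorProduct.assoc K A A A).symm.toLinearMap ∘ₗ TT -
        TensorProduct.map ξ β ∘ₗ (TensorProduct.assoc K A A A).symm.toLinearMap) :
    (LinearMap.mul' K A ∘ₗ T) ∘ₗ TensorProduct.map α (LinearMap.mul' K A ∘ₗ T) =
      (LinearMap.mul' K A ∘ₗ T) ∘ₗ TensorProduct.map (LinearMap.mul' K A ∘ₗ T) β ∘ₗ
        (TensorProduct.assoc K A A A).symm.toLinearMap :=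
  stmt7_general (isBiHomAssociative_iff_forall_tmul.2 hassoc) ⟨hcurv, hT1, hT2⟩
end

section
/- Let (A, R, S, α, β, ξ, ζ) be a double curved Rota-Baxter BiHom-system satisfying μ∘(α⊗ζ) = μ∘(ξ⊗β), and define T : A⊗A → A⊗A by T(a⊗b) = R(a)⊗b + a⊗S(b) and 𝔗 : A⊗A⊗A → A⊗A⊗A by 𝔗(a⊗b⊗c) = R(a)⊗R(b)⊗c + R(a)⊗b⊗S(c) + a⊗S(b)⊗S(c). Then T is a double curved weak BiHom-pseudotwistor with weak companion 𝔗 and curvatures ξ, ζ. -/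
open TensorProduct

section Defs

variable {K A : Type*} [Field K] [NonUnitalNonAssocRing A] [Module K A]
  [SMulCommClass K A A] [IsScalarTower K A A]

/-- `T(a⊗b) = R(a)⊗b + a⊗S(b)`. -/
noncomputable def twistT (R S : A →ₗ[K] A) : A ⊗[K] A →ₗ[K] A ⊗[K] A :=
  TensorProduct.map R LinearMap.id + TensorProduct.map LinearMap.id S

/-- `𝔗(a⊗b⊗c) = R(a)⊗R(b)⊗c + R(a)⊗b⊗S(c) + a⊗S(b)⊗S(c)`. -/
noncomputable def twistTT (R S : A →ₗ[K] A) :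
    A ⊗[K] (A ⊗[K] A) →ₗ[K] A ⊗[K] (A ⊗[K] A) :=
  TensorProduct.map R (TensorProduct.map R LinearMap.id) +
    TensorProduct.map R (TensorProduct.map LinearMap.id S) +
    TensorProduct.map LinearMap.id (TensorProduct.map S S)

end Defs

/-!
Write `a ⋆ b = R a * b + a * S b` for the product `μ ∘ T`. The two Rota-Baxter identities say that
`R` and `S` are multiplicative from `⋆` to `μ` up to the curvatures: `R a * R b = R (a ⋆ b) + ξ` and
`S a * S b = S (a ⋆ b) + ζ`. On the other side, the companion splits in two ways,
`𝔗 = R ⊗ T + id ⊗ (S ⊗ S) = (R ⊗ R) ⊗ id + T ⊗ S`. Hence `T (α a ⊗ (b ⋆ c))` and the value of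
`(α ⊗ μ) ∘ 𝔗` at `a ⊗ b ⊗ c` share the term `α (R a) ⊗ (b ⋆ c)`, and their other terms
`α a ⊗ S (b ⋆ c)` and `α a ⊗ (S b * S c)` differ by `α a ⊗ ζ (b ⊗ c)`. The second splitting gives
the mirror image.
-/

section TensorTwist

variable {K A M N : Type*} [CommSemiring K] [AddCommMonoid A] [Module K A]
  [AddCommMonoid M] [Module K M] [AddCommMonoid N] [Module K N]

/-- The map `a ⊗ b ↦ R a ⊗ b + a ⊗ S b`: the analogue of `twistT` for a module over a commutative
semiring, where no product on `A` is needed. -/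
noncomputable def tensorTwist (R S : A →ₗ[K] A) : A ⊗[K] A →ₗ[K] A ⊗[K] A :=
  map R LinearMap.id + map LinearMap.id S

/-- The weak companion of `tensorTwist R S`: the analogue of `twistTT` for a module over a
commutative semiring. -/
noncomputable def tensorTwistCompanion (R S : A →ₗ[K] A) :
    A ⊗[K] (A ⊗[K] A) →ₗ[K] A ⊗[K] (A ⊗[K] A) :=
  map R (map R LinearMap.id) + map R (map LinearMap.id S) + map LinearMap.id (map S S)

theorem tensorTwist_comp_map (R S : A →ₗ[K] A) (f : M →ₗ[K] A) (g : N →ₗ[K] A) :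
    tensorTwist R S ∘ₗ map f g = map (R ∘ₗ f) g + map f (S ∘ₗ g) := by
  simp only [tensorTwist, LinearMap.add_comp, ← map_comp, LinearMap.id_comp]

theorem tensorTwistCompanion_eq_map_add_map (R S : A →ₗ[K] A) :
    tensorTwistCompanion R S = map R (tensorTwist R S) + map LinearMap.id (map S S) := by
  rw [tensorTwistCompanion, tensorTwist, map_add_right]

theorem assoc_symm_comp_tensorTwistCompanion (R S : A →ₗ[K] A) :
    (TensorProduct.assoc K A A A).symm.toLinearMap ∘ₗ tensorTwistCompanion R S =
      (map (map R R) LinearMap.id + map (tensorTwist R S) S) ∘ₗ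
        (TensorProduct.assoc K A A A).symm.toLinearMap := by
  simp only [tensorTwistCompanion, tensorTwist, map_add_left, LinearMap.comp_add,
    LinearMap.add_comp, map_map_comp_assoc_symm_eq, add_assoc]

theorem comp_map_eq_comp_tensorTwist_add {μ ω : A ⊗[K] A →ₗ[K] A} {R S f : A →ₗ[K] A}
    (hf : ∀ a b, μ (f a ⊗ₜ f b) = f (μ (R a ⊗ₜ b)) + f (μ (a ⊗ₜ S b)) + ω (a ⊗ₜ b)) :
    μ ∘ₗ map f f = f ∘ₗ μ ∘ₗ tensorTwist R S + ω := by
  ext a b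
  simp [tensorTwist, hf]

theorem tensorTwist_comp_map_right_add {μ ζ : A ⊗[K] A →ₗ[K] A} {α R S : A →ₗ[K] A}
    (hRα : R ∘ₗ α = α ∘ₗ R) (hS : μ ∘ₗ map S S = S ∘ₗ μ ∘ₗ tensorTwist R S + ζ) :
    tensorTwist R S ∘ₗ map α (μ ∘ₗ tensorTwist R S) + map α ζ =
      map α μ ∘ₗ tensorTwistCompanion R S :=
  calc tensorTwist R S ∘ₗ map α (μ ∘ₗ tensorTwist R S) + map α ζ
    _ = map (α ∘ₗ R) (μ ∘ₗ tensorTwist R S) + map α (S ∘ₗ μ ∘ₗ tensorTwist R S + ζ) := by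
      rw [tensorTwist_comp_map, hRα, map_add_right, add_assoc]
    _ = map (α ∘ₗ R) (μ ∘ₗ tensorTwist R S) + map α (μ ∘ₗ map S S) := by rw [hS]
    _ = map α μ ∘ₗ tensorTwistCompanion R S := by
      rw [tensorTwistCompanion_eq_map_add_map, LinearMap.comp_add, ← map_comp, ← map_comp,
        LinearMap.comp_id]

theorem tensorTwist_comp_map_left_add {μ ξ : A ⊗[K] A →ₗ[K] A} {β R S : A →ₗ[K] A}
    (hSβ : S ∘ₗ β = β ∘ₗ S) (hR : μ ∘ₗ map R R = R ∘ₗ μ ∘ₗ tensorTwist R S + ξ) :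
    tensorTwist R S ∘ₗ map (μ ∘ₗ tensorTwist R S) β + map ξ β =
      map μ β ∘ₗ (map (map R R) LinearMap.id + map (tensorTwist R S) S) :=
  calc tensorTwist R S ∘ₗ map (μ ∘ₗ tensorTwist R S) β + map ξ β
    _ = map (R ∘ₗ μ ∘ₗ tensorTwist R S + ξ) β + map (μ ∘ₗ tensorTwist R S) (β ∘ₗ S) := by
      rw [tensorTwist_comp_map, hSβ, map_add_left, add_right_comm]
    _ = map (μ ∘ₗ map R R) β + map (μ ∘ₗ tensorTwist R S) (β ∘ₗ S) := by rw [hR]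
    _ = map μ β ∘ₗ (map (map R R) LinearMap.id + map (tensorTwist R S) S) := by
      rw [LinearMap.comp_add, ← map_comp, ← map_comp, LinearMap.comp_id]

end TensorTwist

section Pseudotwistor

variable {K A : Type*} [CommRing K] [AddCommGroup A] [Module K A]

/-- Double curved weak BiHom-pseudotwistors `T` with weak companion `𝔗` and curvatures `ξ`, `ζ`,
for an arbitrary bilinear product `μ`. The triple tensor power is bracketed to the right, so maps
acting jointly on the first two factors are precomposed with the inverse associator. -/
structure IsDoubleCurvedWeakPseudotwistor (μ : A ⊗[K] A →ₗ[K] A) (α β : A →ₗ[K] A)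
    (T : A ⊗[K] A →ₗ[K] A ⊗[K] A) (𝔗 : A ⊗[K] (A ⊗[K] A) →ₗ[K] A ⊗[K] (A ⊗[K] A))
    (ξ ζ : A ⊗[K] A →ₗ[K] A) : Prop where
  curvature_compat : μ ∘ₗ map α ζ = μ ∘ₗ map ξ β ∘ₗ (TensorProduct.assoc K A A A).symm.toLinearMap
  comp_map_right : T ∘ₗ map α (μ ∘ₗ T) = map α μ ∘ₗ 𝔗 - map α ζ
  comp_map_left : T ∘ₗ map (μ ∘ₗ T) β ∘ₗ (TensorProduct.assoc K A A A).symm.toLinearMap =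
    map μ β ∘ₗ (TensorProduct.assoc K A A A).symm.toLinearMap ∘ₗ 𝔗 -
      map ξ β ∘ₗ (TensorProduct.assoc K A A A).symm.toLinearMap

theorem stmt8_general (μ : A ⊗[K] A →ₗ[K] A) (α β R S : A →ₗ[K] A) (ξ ζ : A ⊗[K] A →ₗ[K] A)
    (hRα : ∀ a, R (α a) = α (R a)) (hSβ : ∀ a, S (β a) = β (S a))
    (hR : ∀ a b, μ (R a ⊗ₜ R b) = R (μ (R a ⊗ₜ b)) + R (μ (a ⊗ₜ S b)) + ξ (a ⊗ₜ b))
    (hS : ∀ a b, μ (S a ⊗ₜ S b) = S (μ (R a ⊗ₜ b)) + S (μ (a ⊗ₜ S b)) + ζ (a ⊗ₜ b))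
    (hcurv : μ ∘ₗ map α ζ = μ ∘ₗ map ξ β ∘ₗ (TensorProduct.assoc K A A A).symm.toLinearMap) :
    IsDoubleCurvedWeakPseudotwistor μ α β (tensorTwist R S) (tensorTwistCompanion R S) ξ ζ where
  curvature_compat := hcurv
  comp_map_right := eq_sub_of_add_eq <|
    tensorTwist_comp_map_right_add (LinearMap.ext hRα) (comp_map_eq_comp_tensorTwist_add hS)
  comp_map_left := by
    have h := tensorTwist_comp_map_left_add (LinearMap.ext hSβ)
      (comp_map_eq_comp_tensorTwist_add hR)
    rw [assoc_symm_comp_tensorTwistCompanion, ← LinearMap.comp_assoc, ← LinearMap.comp_assoc,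
      ← LinearMap.sub_comp, eq_sub_of_add_eq h]

end Pseudotwistor

/-- Theorem 2.17: a double curved Rota-Baxter BiHom-system
`(A, R, S, α, β, ξ, ζ)` satisfying `μ∘(α⊗ζ) = μ∘(ξ⊗β)` gives rise to a double
curved weak BiHom-pseudotwistor `T(a⊗b) = R(a)⊗b + a⊗S(b)` with weak companion
`𝔗(a⊗b⊗c) = R(a)⊗R(b)⊗c + R(a)⊗b⊗S(c) + a⊗S(b)⊗S(c)` and curvatures `ξ, ζ`. -/
theorem stmt8 {K A : Type*} [Field K] [NonUnitalNonAssocRing A] [Module K A]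
    [SMulCommClass K A A] [IsScalarTower K A A]
    (α β R S : A →ₗ[K] A) (ξ ζ : A ⊗[K] A →ₗ[K] A)
    -- BiHom-associative algebra axioms for (A, ·, α, β)
    (hαβ : ∀ a, α (β a) = β (α a))
    (hαmul : ∀ a b, α (a * b) = α a * α b)
    (hβmul : ∀ a b, β (a * b) = β a * β b)
    (hassoc : ∀ a b c, α a * (b * c) = (a * b) * β c)
    -- R, S commute with α and β
    (hRα : ∀ a, R (α a) = α (R a)) (hRβ : ∀ a, R (β a) = β (R a))
    (hSα : ∀ a, S (α a) = α (S a)) (hSβ : ∀ a, S (β a) = β (S a))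
    -- double curved Rota-Baxter BiHom-system identities
    (hR : ∀ a b, R a * R b = R (R a * b) + R (a * S b) + ξ (a ⊗ₜ[K] b))
    (hS : ∀ a b, S a * S b = S (R a * b) + S (a * S b) + ζ (a ⊗ₜ[K] b))
    -- μ∘(α⊗ζ) = μ∘(ξ⊗β)
    (hcurv : LinearMap.mul' K A ∘ₗ TensorProduct.map α ζ =
      LinearMap.mul' K A ∘ₗ TensorProduct.map ξ β ∘ₗ
        (TensorProduct.assoc K A A A).symm.toLinearMap) :
    -- conclusion: T is a double curved weak BiHom-pseudotwistor with weak
    -- companion 𝔗 and curvatures ξ, ζ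
    (LinearMap.mul' K A ∘ₗ TensorProduct.map α ζ =
      LinearMap.mul' K A ∘ₗ TensorProduct.map ξ β ∘ₗ
        (TensorProduct.assoc K A A A).symm.toLinearMap) ∧
    (twistT R S ∘ₗ TensorProduct.map α (LinearMap.mul' K A ∘ₗ twistT R S) =
      TensorProduct.map α (LinearMap.mul' K A) ∘ₗ twistTT R S -
        TensorProduct.map α ζ) ∧
    (twistT R S ∘ₗ TensorProduct.map (LinearMap.mul' K A ∘ₗ twistT R S) β ∘ₗ
        (TensorProduct.assoc K A A A).symm.toLinearMap =
      TensorProduct.map (LinearMap.mul' K A) β ∘ₗ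
          (TensorProduct.assoc K A A A).symm.toLinearMap ∘ₗ twistTT R S -
        TensorProduct.map ξ β ∘ₗ (TensorProduct.assoc K A A A).symm.toLinearMap) :=
  have h := stmt8_general (LinearMap.mul' K A) α β R S ξ ζ hRα hSβ hR hS hcurv
  ⟨h.curvature_compat, h.comp_map_right, h.comp_map_left⟩
end

section
/- Let (A, μ, α_A, β_A) be a BiHom-associative algebra, and let (M, ▷, ◁, α_M, β_M), (N, ▷, ◁, α_N, β_N), (V, ▷, ◁, α_V, β_V) be bimodules over (A, μ, α_A, β_A). Let ψ_A, ω_A : A → A be linear maps such that ψ_A(ab) = ψ_A(a)ψ_A(b), ω_A(ab) = ω_A(a)ω_A(b), and any two of α_A, β_A, ψ_A, ω_A commute. Define a left and a right action of A on M⊗N⊗V by a▷(m⊗n⊗v) = (ω_A(a)▷m)⊗β_N(n)⊗β_V(v) and (m⊗n⊗v)◁a = α_M(m)⊗α_N(n)⊗(v◁ψ_A(a)). Then (M⊗N⊗V, ▷, ◁, α_M⊗α_N⊗α_V, β_M⊗β_N⊗β_V) is a bimodule over (A, μ, α_A, β_A). -/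
open TensorProduct

section Defs

variable {K A M N V : Type*} [Field K] [NonUnitalNonAssocRing A] [Module K A]
  [SMulCommClass K A A] [IsScalarTower K A A]
  [AddCommGroup M] [Module K M] [AddCommGroup N] [Module K N]
  [AddCommGroup V] [Module K V]

/-- The left action `a ▷ (m⊗n⊗v) = (ω_A(a)▷m) ⊗ β_N(n) ⊗ β_V(v)`. -/
noncomputable def lact3 (ωA : A →ₗ[K] A) (lM : A →ₗ[K] M →ₗ[K] M)
    (βN : N →ₗ[K] N) (βV : V →ₗ[K] V) (a : A) :
    M ⊗[K] (N ⊗[K] V) →ₗ[K] M ⊗[K] (N ⊗[K] V) :=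
  TensorProduct.map (lM (ωA a)) (TensorProduct.map βN βV)

/-- The right action `(m⊗n⊗v) ◁ a = α_M(m) ⊗ α_N(n) ⊗ (v ◁ ψ_A(a))`. -/
noncomputable def ract3 (ψA : A →ₗ[K] A) (αM : M →ₗ[K] M) (αN : N →ₗ[K] N)
    (rV : V →ₗ[K] A →ₗ[K] V) (a : A) :
    M ⊗[K] (N ⊗[K] V) →ₗ[K] M ⊗[K] (N ⊗[K] V) :=
  TensorProduct.map αM (TensorProduct.map αN (rV.flip (ψA a)))

end Defs

/-!
The left action on `M ⊗ N ⊗ V` acts only on the factor `M` and the right action only on `V`.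
So it is enough that a left module `M` and a right module `P` give a bimodule `M ⊗ P` with
`a ▷ (m ⊗ p) = (a ▷ m) ⊗ β p` and `(m ⊗ p) ◁ a = α m ⊗ (p ◁ a)`: each axiom splits into one
identity on `M` and one on `P`, and compatibility of the two actions reduces to
`α (a ▷ m) = α a ▷ α m` and `β (p ◁ b) = β p ◁ β b`. Now restrict the action on `M` along `ω`,
the action on `V` along `ψ`, and take `P = N ⊗ V`.
-/

section TensorMap

variable {R M N P P' Q S S' T : Type*} [CommSemiring R]
  [AddCommMonoid M] [Module R M] [AddCommMonoid N] [Module R N]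
  [AddCommMonoid P] [Module R P] [AddCommMonoid P'] [Module R P']
  [AddCommMonoid Q] [Module R Q] [AddCommMonoid S] [Module R S]
  [AddCommMonoid S'] [Module R S'] [AddCommMonoid T] [Module R T]

theorem tensorMap_tensorMap_congr {f' : M →ₗ[R] P} {f : P →ₗ[R] Q} {g' : M →ₗ[R] P'}
    {g : P' →ₗ[R] Q} {h' : N →ₗ[R] S} {h : S →ₗ[R] T} {k' : N →ₗ[R] S'} {k : S' →ₗ[R] T}
    (hfg : ∀ m, f (f' m) = g (g' m)) (hhk : ∀ n, h (h' n) = k (k' n)) (t : M ⊗[R] N) :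
    map f h (map f' h' t) = map g k (map g' k' t) := by
  have hfg' : f ∘ₗ f' = g ∘ₗ g' := LinearMap.ext hfg
  have hhk' : h ∘ₗ h' = k ∘ₗ k' := LinearMap.ext hhk
  rw [map_map, map_map, hfg', hhk']

end TensorMap

section TensorAct

variable {R A M N : Type*} [CommSemiring R] [AddCommMonoid A] [Module R A]
  [AddCommMonoid M] [Module R M] [AddCommMonoid N] [Module R N]

/-- The left action `a ▷ (m ⊗ n) = (a ▷ m) ⊗ β n` on a tensor product whose first factor carries
a left action `l`. -/
noncomputable def tensorLeftAct (l : A →ₗ[R] M →ₗ[R] M) (β : N →ₗ[R] N) :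
    A →ₗ[R] M ⊗[R] N →ₗ[R] M ⊗[R] N :=
  (mapBilinear (.id R) M N M N).flip β ∘ₗ l

/-- The right action `(m ⊗ n) ◁ a = α m ⊗ (n ◁ a)` on a tensor product whose second factor carries
a right action `r`. -/
noncomputable def tensorRightAct (α : M →ₗ[R] M) (r : N →ₗ[R] A →ₗ[R] N) :
    M ⊗[R] N →ₗ[R] A →ₗ[R] M ⊗[R] N :=
  (mapBilinear (.id R) M N M N α ∘ₗ r.flip).flip

end TensorAct

section BiHom

variable {R A B M N : Type*} [CommSemiring R]
  [NonUnitalNonAssocSemiring A] [Module R A] [NonUnitalNonAssocSemiring B] [Module R B]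
  [AddCommMonoid M] [Module R M] [AddCommMonoid N] [Module R N]

/-- A morphism `(B, μ, α_B, β_B) → (A, μ, α_A, β_A)` of BiHom-algebras: a linear map that is
multiplicative and intertwines the structure maps. -/
structure IsBiHomAlgHom (αB βB : B →ₗ[R] B) (αA βA : A →ₗ[R] A) (φ : B →ₗ[R] A) : Prop where
  map_mul : ∀ a b, φ (a * b) = φ a * φ b
  map_α : ∀ a, αA (φ a) = φ (αB a)
  map_β : ∀ a, βA (φ a) = φ (βB a)

/-- The axioms of a left `(A, μ, α_A, β_A)`-module `(M, ▷, α, β)`, where `a ▷ m` is `l a m`.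
The axioms relating `μ`, `α_A` and `β_A` to each other are not part of the predicate. -/
structure IsBiHomLeftModule (αA βA : A →ₗ[R] A) (α β : M →ₗ[R] M)
    (l : A →ₗ[R] M →ₗ[R] M) : Prop where
  comm : ∀ m, α (β m) = β (α m)
  α_act : ∀ a m, α (l a m) = l (αA a) (α m)
  β_act : ∀ a m, β (l a m) = l (βA a) (β m)
  act_act : ∀ a b m, l (αA a) (l b m) = l (a * b) (β m)

/-- The axioms of a right `(A, μ, α_A, β_A)`-module `(M, ◁, α, β)`, where `m ◁ a` is `r m a`. -/
structure IsBiHomRightModule (αA βA : A →ₗ[R] A) (α β : M →ₗ[R] M)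
    (r : M →ₗ[R] A →ₗ[R] M) : Prop where
  comm : ∀ m, α (β m) = β (α m)
  α_act : ∀ a m, α (r m a) = r (α m) (αA a)
  β_act : ∀ a m, β (r m a) = r (β m) (βA a)
  act_mul : ∀ a b m, r (α m) (a * b) = r (r m a) (βA b)

/-- The axioms of an `(A, μ, α_A, β_A)`-bimodule `(M, ▷, ◁, α, β)`. -/
structure IsBiHomBimodule (αA βA : A →ₗ[R] A) (α β : M →ₗ[R] M)
    (l : A →ₗ[R] M →ₗ[R] M) (r : M →ₗ[R] A →ₗ[R] M) : Prop where
  left : IsBiHomLeftModule αA βA α β l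
  right : IsBiHomRightModule αA βA α β r
  left_right : ∀ a b m, l (αA a) (r m b) = r (l a m) (βA b)

variable {αA βA : A →ₗ[R] A} {αB βB : B →ₗ[R] B} {αM βM : M →ₗ[R] M} {αN βN : N →ₗ[R] N}

theorem IsBiHomLeftModule.restrictScalars {l : A →ₗ[R] M →ₗ[R] M} {φ : B →ₗ[R] A}
    (hM : IsBiHomLeftModule αA βA αM βM l) (hφ : IsBiHomAlgHom αB βB αA βA φ) :
    IsBiHomLeftModule αB βB αM βM (l ∘ₗ φ) where
  comm := hM.comm
  α_act a m := by simp only [LinearMap.comp_apply, hM.α_act, hφ.map_α]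
  β_act a m := by simp only [LinearMap.comp_apply, hM.β_act, hφ.map_β]
  act_act a b m := by simp only [LinearMap.comp_apply, ← hφ.map_α, hM.act_act, hφ.map_mul]

theorem IsBiHomRightModule.restrictScalars {r : M →ₗ[R] A →ₗ[R] M} {φ : B →ₗ[R] A}
    (hM : IsBiHomRightModule αA βA αM βM r) (hφ : IsBiHomAlgHom αB βB αA βA φ) :
    IsBiHomRightModule αB βB αM βM (r.compl₂ φ) where
  comm := hM.comm
  α_act a m := by simp only [LinearMap.compl₂_apply, hM.α_act, hφ.map_α]
  β_act a m := by simp only [LinearMap.compl₂_apply, hM.β_act, hφ.map_β]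
  act_mul a b m := by simp only [LinearMap.compl₂_apply, ← hφ.map_β, hM.act_mul, hφ.map_mul]

theorem IsBiHomLeftModule.tensor {l : A →ₗ[R] M →ₗ[R] M}
    (hM : IsBiHomLeftModule αA βA αM βM l) (hN : ∀ n, αN (βN n) = βN (αN n)) :
    IsBiHomLeftModule αA βA (map αM αN) (map βM βN) (tensorLeftAct l βN) where
  comm := tensorMap_tensorMap_congr hM.comm hN
  α_act a := tensorMap_tensorMap_congr (hM.α_act a) hN
  β_act a := tensorMap_tensorMap_congr (hM.β_act a) fun _ ↦ rfl
  act_act a b := tensorMap_tensorMap_congr (hM.act_act a b) fun _ ↦ rfl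

theorem IsBiHomRightModule.tensor {r : N →ₗ[R] A →ₗ[R] N}
    (hM : ∀ m, αM (βM m) = βM (αM m)) (hN : IsBiHomRightModule αA βA αN βN r) :
    IsBiHomRightModule αA βA (map αM αN) (map βM βN) (tensorRightAct αM r) where
  comm := tensorMap_tensorMap_congr hM hN.comm
  α_act a := tensorMap_tensorMap_congr (fun _ ↦ rfl) (hN.α_act a)
  β_act a := tensorMap_tensorMap_congr (fun m ↦ (hM m).symm) (hN.β_act a)
  act_mul a b := tensorMap_tensorMap_congr (fun _ ↦ rfl) (hN.act_mul a b)

theorem IsBiHomLeftModule.tensor_isBiHomBimodule {l : A →ₗ[R] M →ₗ[R] M}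
    {r : N →ₗ[R] A →ₗ[R] N} (hM : IsBiHomLeftModule αA βA αM βM l)
    (hN : IsBiHomRightModule αA βA αN βN r) :
    IsBiHomBimodule αA βA (map αM αN) (map βM βN) (tensorLeftAct l βN) (tensorRightAct αM r) where
  left := hM.tensor hN.comm
  right := hN.tensor hM.comm
  left_right a b := tensorMap_tensorMap_congr (fun m ↦ (hM.α_act a m).symm) fun n ↦ hN.β_act b n

theorem stmt9_general {V : Type*} [AddCommMonoid V] [Module R V]
    {αV βV : V →ₗ[R] V} {ψA ωA : A →ₗ[R] A}
    {lM : A →ₗ[R] M →ₗ[R] M} {rV : V →ₗ[R] A →ₗ[R] V}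
    (hψ : IsBiHomAlgHom αA βA αA βA ψA) (hω : IsBiHomAlgHom αA βA αA βA ωA)
    (hM : IsBiHomLeftModule αA βA αM βM lM) (hN : ∀ n, αN (βN n) = βN (αN n))
    (hV : IsBiHomRightModule αA βA αV βV rV) :
    IsBiHomBimodule αA βA (map αM (map αN αV)) (map βM (map βN βV))
      (tensorLeftAct (lM ∘ₗ ωA) (map βN βV))
      (tensorRightAct αM (tensorRightAct αN (rV.compl₂ ψA))) :=
  (hM.restrictScalars hω).tensor_isBiHomBimodule ((hV.restrictScalars hψ).tensor hN)

end BiHom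

section Ternary

variable {K A M N V : Type*} [Field K] [NonUnitalNonAssocRing A] [Module K A]
  [AddCommGroup M] [Module K M] [AddCommGroup N] [Module K N] [AddCommGroup V] [Module K V]

theorem lact3_eq_tensorLeftAct (ωA : A →ₗ[K] A) (lM : A →ₗ[K] M →ₗ[K] M) (βN : N →ₗ[K] N)
    (βV : V →ₗ[K] V) (a : A) :
    lact3 ωA lM βN βV a = tensorLeftAct (lM ∘ₗ ωA) (map βN βV) a :=
  rfl

theorem ract3_apply_eq_tensorRightAct (ψA : A →ₗ[K] A) (αM : M →ₗ[K] M) (αN : N →ₗ[K] N)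
    (rV : V →ₗ[K] A →ₗ[K] V) (a : A) (t : M ⊗[K] (N ⊗[K] V)) :
    ract3 ψA αM αN rV a t = tensorRightAct αM (tensorRightAct αN (rV.compl₂ ψA)) t a :=
  rfl

end Ternary

/-- Proposition 2.19: given a BiHom-associative algebra
`(A, μ, α_A, β_A)`, bimodules `M, N, V` over it, and multiplicative maps
`ψ_A, ω_A : A → A` such that any two of `α_A, β_A, ψ_A, ω_A` commute, the actions
`a▷(m⊗n⊗v) = (ω_A(a)▷m)⊗β_N(n)⊗β_V(v)` and `(m⊗n⊗v)◁a = α_M(m)⊗α_N(n)⊗(v◁ψ_A(a))`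
make `(M⊗N⊗V, ▷, ◁, α_M⊗α_N⊗α_V, β_M⊗β_N⊗β_V)` an `(A, μ, α_A, β_A)`-bimodule. -/
theorem stmt9 {K A M N V : Type*} [Field K] [NonUnitalNonAssocRing A] [Module K A]
    [SMulCommClass K A A] [IsScalarTower K A A]
    [AddCommGroup M] [Module K M] [AddCommGroup N] [Module K N]
    [AddCommGroup V] [Module K V]
    (αA βA ψA ωA : A →ₗ[K] A)
    (αM βM : M →ₗ[K] M) (αN βN : N →ₗ[K] N) (αV βV : V →ₗ[K] V)
    (lM : A →ₗ[K] M →ₗ[K] M) (rM : M →ₗ[K] A →ₗ[K] M)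
    (lN : A →ₗ[K] N →ₗ[K] N) (rN : N →ₗ[K] A →ₗ[K] N)
    (lV : A →ₗ[K] V →ₗ[K] V) (rV : V →ₗ[K] A →ₗ[K] V)
    -- BiHom-associative algebra axioms for (A, ·, αA, βA)
    (hαβ : ∀ a, αA (βA a) = βA (αA a))
    (hαmul : ∀ a b, αA (a * b) = αA a * αA b)
    (hβmul : ∀ a b, βA (a * b) = βA a * βA b)
    (hassoc : ∀ a b c, αA a * (b * c) = (a * b) * βA c)
    -- ψA, ωA multiplicative, and any two of αA, βA, ψA, ωA commute
    (hψmul : ∀ a b, ψA (a * b) = ψA a * ψA b)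
    (hωmul : ∀ a b, ωA (a * b) = ωA a * ωA b)
    (hc1 : ∀ a, αA (βA a) = βA (αA a)) (hc2 : ∀ a, αA (ψA a) = ψA (αA a))
    (hc3 : ∀ a, αA (ωA a) = ωA (αA a)) (hc4 : ∀ a, βA (ψA a) = ψA (βA a))
    (hc5 : ∀ a, βA (ωA a) = ωA (βA a)) (hc6 : ∀ a, ψA (ωA a) = ωA (ψA a))
    -- M is an (A, μ, αA, βA)-bimodule
    (hMc : ∀ m, αM (βM m) = βM (αM m))
    (hMlα : ∀ a m, αM (lM a m) = lM (αA a) (αM m))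
    (hMlβ : ∀ a m, βM (lM a m) = lM (βA a) (βM m))
    (hMl : ∀ a b m, lM (αA a) (lM b m) = lM (a * b) (βM m))
    (hMrα : ∀ a m, αM (rM m a) = rM (αM m) (αA a))
    (hMrβ : ∀ a m, βM (rM m a) = rM (βM m) (βA a))
    (hMr : ∀ a b m, rM (αM m) (a * b) = rM (rM m a) (βA b))
    (hMlr : ∀ a b m, lM (αA a) (rM m b) = rM (lM a m) (βA b))
    -- N is an (A, μ, αA, βA)-bimodule
    (hNc : ∀ n, αN (βN n) = βN (αN n))
    (hNlα : ∀ a n, αN (lN a n) = lN (αA a) (αN n))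
    (hNlβ : ∀ a n, βN (lN a n) = lN (βA a) (βN n))
    (hNl : ∀ a b n, lN (αA a) (lN b n) = lN (a * b) (βN n))
    (hNrα : ∀ a n, αN (rN n a) = rN (αN n) (αA a))
    (hNrβ : ∀ a n, βN (rN n a) = rN (βN n) (βA a))
    (hNr : ∀ a b n, rN (αN n) (a * b) = rN (rN n a) (βA b))
    (hNlr : ∀ a b n, lN (αA a) (rN n b) = rN (lN a n) (βA b))
    -- V is an (A, μ, αA, βA)-bimodule
    (hVc : ∀ v, αV (βV v) = βV (αV v))
    (hVlα : ∀ a v, αV (lV a v) = lV (αA a) (αV v))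
    (hVlβ : ∀ a v, βV (lV a v) = lV (βA a) (βV v))
    (hVl : ∀ a b v, lV (αA a) (lV b v) = lV (a * b) (βV v))
    (hVrα : ∀ a v, αV (rV v a) = rV (αV v) (αA a))
    (hVrβ : ∀ a v, βV (rV v a) = rV (βV v) (βA a))
    (hVr : ∀ a b v, rV (αV v) (a * b) = rV (rV v a) (βA b))
    (hVlr : ∀ a b v, lV (αA a) (rV v b) = rV (lV a v) (βA b)) :
    -- conclusion: M⊗N⊗V is an (A, μ, αA, βA)-bimodule
    -- the actions are bilinear
    (∀ a b t, lact3 ωA lM βN βV (a + b) t = lact3 ωA lM βN βV a t + lact3 ωA lM βN βV b t) ∧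
    (∀ (c : K) a t, lact3 ωA lM βN βV (c • a) t = c • lact3 ωA lM βN βV a t) ∧
    (∀ a b t, ract3 ψA αM αN rV (a + b) t = ract3 ψA αM αN rV a t + ract3 ψA αM αN rV b t) ∧
    (∀ (c : K) a t, ract3 ψA αM αN rV (c • a) t = c • ract3 ψA αM αN rV a t) ∧
    -- the structure maps commute
    (∀ t : M ⊗[K] (N ⊗[K] V),
      TensorProduct.map αM (TensorProduct.map αN αV)
          (TensorProduct.map βM (TensorProduct.map βN βV) t) =
        TensorProduct.map βM (TensorProduct.map βN βV)
          (TensorProduct.map αM (TensorProduct.map αN αV) t)) ∧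
    -- left module axioms
    (∀ a t, TensorProduct.map αM (TensorProduct.map αN αV) (lact3 ωA lM βN βV a t) =
      lact3 ωA lM βN βV (αA a) (TensorProduct.map αM (TensorProduct.map αN αV) t)) ∧
    (∀ a t, TensorProduct.map βM (TensorProduct.map βN βV) (lact3 ωA lM βN βV a t) =
      lact3 ωA lM βN βV (βA a) (TensorProduct.map βM (TensorProduct.map βN βV) t)) ∧
    (∀ a b t, lact3 ωA lM βN βV (αA a) (lact3 ωA lM βN βV b t) =
      lact3 ωA lM βN βV (a * b) (TensorProduct.map βM (TensorProduct.map βN βV) t)) ∧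
    -- right module axioms
    (∀ a t, TensorProduct.map αM (TensorProduct.map αN αV) (ract3 ψA αM αN rV a t) =
      ract3 ψA αM αN rV (αA a) (TensorProduct.map αM (TensorProduct.map αN αV) t)) ∧
    (∀ a t, TensorProduct.map βM (TensorProduct.map βN βV) (ract3 ψA αM αN rV a t) =
      ract3 ψA αM αN rV (βA a) (TensorProduct.map βM (TensorProduct.map βN βV) t)) ∧
    (∀ a b t, ract3 ψA αM αN rV (a * b) (TensorProduct.map αM (TensorProduct.map αN αV) t) =
      ract3 ψA αM αN rV (βA b) (ract3 ψA αM αN rV a t)) ∧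
    -- bimodule compatibility
    (∀ a b t, lact3 ωA lM βN βV (αA a) (ract3 ψA αM αN rV b t) =
      ract3 ψA αM αN rV (βA b) (lact3 ωA lM βN βV a t)) := by
  have h := stmt9_general (lM := lM) (rV := rV) ⟨hψmul, hc2, hc4⟩ ⟨hωmul, hc3, hc5⟩
    ⟨hMc, hMlα, hMlβ, hMl⟩ hNc ⟨hVc, hVrα, hVrβ, hVr⟩
  simp only [lact3_eq_tensorLeftAct, ract3_apply_eq_tensorRightAct]
  exact ⟨LinearMap.map_add₂ _, LinearMap.map_smul₂ _, fun a b t ↦ map_add _ a b,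
    fun c a t ↦ map_smul _ c a, h.left.comm, h.left.α_act, h.left.β_act, h.left.act_act,
    h.right.α_act, h.right.β_act, h.right.act_mul, h.left_right⟩
end

section
/- Let (A, μ, α, β) be a BiHom-associative algebra with α, β bijective, and let ψ, ω : A → A be linear maps with ψ(ab) = ψ(a)ψ(b) and ω(ab) = ω(a)ω(b) such that any two of α, β, ψ, ω commute. Let r, s ∈ A⊗A be α-, β-, ψ-, and ω-invariant, and define δ_r(a) = α⁻¹(a)▷r − r◁β⁻¹(a), δ_s(a) = α⁻¹(a)▷s − s◁β⁻¹(a), and Δ(a) = α⁻¹(a)▷r − s◁β⁻¹(a). Then δ_r and δ_s are BiHom-derivations, and Δ is a covariant BiHom-derivation with respect to (δ_r, δ_s), i.e., Δ(ab) = Δ(a)◁b + a▷δ_r(b) = a▷Δ(b) + δ_s(a)◁b for all a, b ∈ A. -/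
open TensorProduct

section Defs

variable {K A : Type*} [Field K] [NonUnitalNonAssocRing A] [Module K A]
  [SMulCommClass K A A] [IsScalarTower K A A]

/-- The left action of `A` on `A⊗A`: `a ▷ (x⊗y) = ω(a)x ⊗ β(y)`. -/
noncomputable def lT2 (β ω : A →ₗ[K] A) (a : A) : A ⊗[K] A →ₗ[K] A ⊗[K] A :=
  TensorProduct.map (LinearMap.mulLeft K (ω a)) β

/-- The right action of `A` on `A⊗A`: `(x⊗y) ◁ a = α(x) ⊗ yψ(a)`. -/
noncomputable def rT2 (α ψ : A →ₗ[K] A) (a : A) : A ⊗[K] A →ₗ[K] A ⊗[K] A :=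
  TensorProduct.map α (LinearMap.mulRight K (ψ a))

/-- The left action, bundled as a linear map in the acting variable. -/
noncomputable def lT2hom (β ω : A →ₗ[K] A) : A →ₗ[K] (A ⊗[K] A →ₗ[K] A ⊗[K] A) :=
  TensorProduct.homTensorHomMap (.id K) A A A A ∘ₗ
    (TensorProduct.mk K (A →ₗ[K] A) (A →ₗ[K] A)).flip β ∘ₗ LinearMap.mul K A ∘ₗ ω

/-- The right action, bundled as a linear map in the acting variable. -/
noncomputable def rT2hom (α ψ : A →ₗ[K] A) : A →ₗ[K] (A ⊗[K] A →ₗ[K] A ⊗[K] A) :=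
  TensorProduct.homTensorHomMap (.id K) A A A A ∘ₗ
    TensorProduct.mk K (A →ₗ[K] A) (A →ₗ[K] A) α ∘ₗ (LinearMap.mul K A).flip ∘ₗ ψ

/-- `a ↦ α⁻¹(a) ▷ r − s ◁ β⁻¹(a)`, as a linear map `A → A⊗A`. -/
noncomputable def deltaOp (α β : A ≃ₗ[K] A) (ψ ω : A →ₗ[K] A) (r s : A ⊗[K] A) :
    A →ₗ[K] A ⊗[K] A :=
  (lT2hom β.toLinearMap ω).flip r ∘ₗ α.symm.toLinearMap -
    (rT2hom α.toLinearMap ψ).flip s ∘ₗ β.symm.toLinearMap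

end Defs

/-!
The tensor square `A ⊗ A` is a BiHom-bimodule: `α(a) ▷ (b ▷ t) = ab ▷ (β ⊗ β)(t)`,
`(t ◁ a) ◁ β(b) = (α ⊗ α)(t) ◁ ab` and `α(a) ▷ (t ◁ b) = (a ▷ t) ◁ β(b)`. Write
`Δ_{r,s}(a) = α⁻¹(a) ▷ r - s ◁ β⁻¹(a)`. If `r` is `β`-invariant and `s` is `α`-invariant, then
`Δ_{r,s}(ab) = a ▷ Δ_{r,t}(b) + Δ_{t,s}(a) ◁ b` for *every* `t`, because the two terms containing
`t` cancel. The derivation rules for `δ_r` and `δ_s` are the cases `r = s = t`, and the two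
covariance rules for `Δ` are the cases `t = r` and `t = s`.
-/

section LeftAction

variable {K A : Type*} [Field K] [NonUnitalNonAssocRing A] [Module K A]
  [SMulCommClass K A A] {α β ω F : A →ₗ[K] A}

@[simp]
theorem lT2_tmul (a x y : A) : lT2 β ω a (x ⊗ₜ[K] y) = (ω a * x) ⊗ₜ β y := rfl

theorem lT2_lT2 (hassoc : ∀ a b c, α a * (b * c) = (a * b) * β c)
    (hωmul : ∀ a b, ω (a * b) = ω a * ω b) (hαω : Function.Commute α ω)
    (a b : A) (t : A ⊗[K] A) :
    lT2 β ω (α a) (lT2 β ω b t) = lT2 β ω (a * b) (map β β t) := by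
  induction t with
  | zero => simp only [map_zero]
  | tmul x y => simp only [lT2_tmul, map_tmul, ← hαω.eq, hassoc, hωmul]
  | add t u ht hu => simp only [map_add, ht, hu]

theorem map_lT2 (hFmul : ∀ a b, F (a * b) = F a * F b) (hFβ : Function.Commute F β)
    (hFω : Function.Commute F ω) (a : A) (t : A ⊗[K] A) :
    map F F (lT2 β ω a t) = lT2 β ω (F a) (map F F t) := by
  induction t with
  | zero => simp only [map_zero]
  | tmul x y => simp only [lT2_tmul, map_tmul, hFmul, hFβ.eq, hFω.eq]
  | add t u ht hu => simp only [map_add, ht, hu]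

end LeftAction

section RightAction

variable {K A : Type*} [Field K] [NonUnitalNonAssocRing A] [Module K A]
  [IsScalarTower K A A] {α β ψ F : A →ₗ[K] A}

@[simp]
theorem rT2_tmul (a x y : A) : rT2 α ψ a (x ⊗ₜ[K] y) = α x ⊗ₜ (y * ψ a) := rfl

theorem rT2_rT2 (hassoc : ∀ a b c, α a * (b * c) = (a * b) * β c)
    (hψmul : ∀ a b, ψ (a * b) = ψ a * ψ b) (hβψ : Function.Commute β ψ)
    (a b : A) (t : A ⊗[K] A) :
    rT2 α ψ (β b) (rT2 α ψ a t) = rT2 α ψ (a * b) (map α α t) := by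
  induction t with
  | zero => simp only [map_zero]
  | tmul x y => simp only [rT2_tmul, map_tmul, ← hβψ.eq, hassoc, hψmul]
  | add t u ht hu => simp only [map_add, ht, hu]

theorem map_rT2 (hFmul : ∀ a b, F (a * b) = F a * F b) (hFα : Function.Commute F α)
    (hFψ : Function.Commute F ψ) (a : A) (t : A ⊗[K] A) :
    map F F (rT2 α ψ a t) = rT2 α ψ (F a) (map F F t) := by
  induction t with
  | zero => simp only [map_zero]
  | tmul x y => simp only [rT2_tmul, map_tmul, hFmul, hFα.eq, hFψ.eq]
  | add t u ht hu => simp only [map_add, ht, hu]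

end RightAction

section Derivation

variable {K A : Type*} [Field K] [NonUnitalNonAssocRing A] [Module K A]
  [SMulCommClass K A A] [IsScalarTower K A A]

theorem lT2_rT2 {α β ψ ω : A →ₗ[K] A} (hαmul : ∀ a b, α (a * b) = α a * α b)
    (hβmul : ∀ a b, β (a * b) = β a * β b)
    (hαω : Function.Commute α ω) (hβψ : Function.Commute β ψ) (a b : A) (t : A ⊗[K] A) :
    lT2 β ω (α a) (rT2 α ψ b t) = rT2 α ψ (β b) (lT2 β ω a t) := by
  induction t with
  | zero => simp only [map_zero]
  | tmul x y => simp only [lT2_tmul, rT2_tmul, hαmul, hβmul, hαω.eq, hβψ.eq]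
  | add t u ht hu => simp only [map_add, ht, hu]

/-- `δ : A → A ⊗ A` is a BiHom-derivation: it commutes with each of the four structure maps and
satisfies the Leibniz rule `δ(ab) = a ▷ δ(b) + δ(a) ◁ b`. -/
structure IsBiHomDerivation (α β ψ ω : A →ₗ[K] A) (δ : A →ₗ[K] A ⊗[K] A) : Prop where
  map_alpha (a : A) : map α α (δ a) = δ (α a)
  map_beta (a : A) : map β β (δ a) = δ (β a)
  map_psi (a : A) : map ψ ψ (δ a) = δ (ψ a)
  map_omega (a : A) : map ω ω (δ a) = δ (ω a)
  leibniz (a b : A) : δ (a * b) = lT2 β ω a (δ b) + rT2 α ψ b (δ a)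

variable {α β : A ≃ₗ[K] A} {ψ ω F : A →ₗ[K] A} {r s : A ⊗[K] A}

theorem deltaOp_apply (a : A) :
    deltaOp α β ψ ω r s a =
      lT2 β.toLinearMap ω (α.symm a) r - rT2 α.toLinearMap ψ (β.symm a) s := rfl

theorem map_deltaOp (hFmul : ∀ a b, F (a * b) = F a * F b)
    (hFα : Function.Commute F α) (hFβ : Function.Commute F β)
    (hFψ : Function.Commute F ψ) (hFω : Function.Commute F ω)
    (hr : map F F r = r) (hs : map F F s = s) (a : A) :
    map F F (deltaOp α β ψ ω r s a) = deltaOp α β ψ ω r s (F a) := by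
  have hFα_symm : Function.Commute F α.symm := hFα.inverses_right α.right_inv α.left_inv
  have hFβ_symm : Function.Commute F β.symm := hFβ.inverses_right β.right_inv β.left_inv
  rw [deltaOp_apply, deltaOp_apply, map_sub, map_lT2 hFmul hFβ hFω, map_rT2 hFmul hFα hFψ,
    hr, hs, hFα_symm.eq, hFβ_symm.eq]

theorem deltaOp_mul (hαmul : ∀ a b, α (a * b) = α a * α b)
    (hβmul : ∀ a b, β (a * b) = β a * β b) (hassoc : ∀ a b c, α a * (b * c) = (a * b) * β c)
    (hψmul : ∀ a b, ψ (a * b) = ψ a * ψ b) (hωmul : ∀ a b, ω (a * b) = ω a * ω b)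
    (hαω : Function.Commute α ω) (hβψ : Function.Commute β ψ)
    (hr : map β.toLinearMap β.toLinearMap r = r) (hs : map α.toLinearMap α.toLinearMap s = s)
    (t : A ⊗[K] A) (a b : A) :
    deltaOp α β ψ ω r s (a * b) =
      lT2 β.toLinearMap ω a (deltaOp α β ψ ω r t b) +
        rT2 α.toLinearMap ψ b (deltaOp α β ψ ω t s a) := by
  have hα_symm : α.symm (a * b) = α.symm a * α.symm b :=
    (MulEquiv.mk α.toEquiv hαmul).symm.map_mul a b
  have hβ_symm : β.symm (a * b) = β.symm a * β.symm b :=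
    (MulEquiv.mk β.toEquiv hβmul).symm.map_mul a b
  have hleft : lT2 β.toLinearMap ω a (lT2 β.toLinearMap ω (α.symm b) r) =
      lT2 β.toLinearMap ω (α.symm (a * b)) r := by
    simpa [hr, hα_symm] using
      lT2_lT2 (α := α.toLinearMap) (β := β.toLinearMap) hassoc hωmul hαω (α.symm a) (α.symm b) r
  have hright : rT2 α.toLinearMap ψ b (rT2 α.toLinearMap ψ (β.symm a) s) =
      rT2 α.toLinearMap ψ (β.symm (a * b)) s := by
    simpa [hs, hβ_symm] using
      rT2_rT2 (α := α.toLinearMap) (β := β.toLinearMap) hassoc hψmul hβψ (β.symm a) (β.symm b) s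
  have hmiddle : lT2 β.toLinearMap ω a (rT2 α.toLinearMap ψ (β.symm b) t) =
      rT2 α.toLinearMap ψ b (lT2 β.toLinearMap ω (α.symm a) t) := by
    simpa using
      lT2_rT2 (α := α.toLinearMap) (β := β.toLinearMap) hαmul hβmul hαω hβψ
        (α.symm a) (β.symm b) t
  simp only [deltaOp_apply, map_sub, hleft, hright, hmiddle]
  abel

theorem isBiHomDerivation_deltaOp (hαmul : ∀ a b, α (a * b) = α a * α b)
    (hβmul : ∀ a b, β (a * b) = β a * β b) (hassoc : ∀ a b c, α a * (b * c) = (a * b) * β c)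
    (hψmul : ∀ a b, ψ (a * b) = ψ a * ψ b) (hωmul : ∀ a b, ω (a * b) = ω a * ω b)
    (hαβ : Function.Commute α β) (hαψ : Function.Commute α ψ) (hαω : Function.Commute α ω)
    (hβψ : Function.Commute β ψ) (hβω : Function.Commute β ω) (hψω : Function.Commute ψ ω)
    (hrα : map α.toLinearMap α.toLinearMap r = r) (hrβ : map β.toLinearMap β.toLinearMap r = r)
    (hrψ : map ψ ψ r = r) (hrω : map ω ω r = r) :
    IsBiHomDerivation α.toLinearMap β.toLinearMap ψ ω (deltaOp α β ψ ω r r) where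
  map_alpha := map_deltaOp hαmul (.refl α) hαβ hαψ hαω hrα hrα
  map_beta := map_deltaOp hβmul hαβ.symm (.refl β) hβψ hβω hrβ hrβ
  map_psi := map_deltaOp hψmul hαψ.symm hβψ.symm (.refl ψ) hψω hrψ hrψ
  map_omega := map_deltaOp hωmul hαω.symm hβω.symm hψω.symm (.refl ω) hrω hrω
  leibniz := deltaOp_mul hαmul hβmul hassoc hψmul hωmul hαω hβψ hrβ hrα r

end Derivation

/-- Lemma 2.22 / Lemma 2.15 of the paper: in a
BiHom-associative algebra `(A, μ, α, β)` with `α, β` bijective, multiplicative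
`ψ, ω`, all four maps pairwise commuting, and `α, β, ψ, ω`-invariant elements
`r, s ∈ A⊗A`, the maps `δ_r(a) = α⁻¹(a)▷r − r◁β⁻¹(a)` and
`δ_s(a) = α⁻¹(a)▷s − s◁β⁻¹(a)` are BiHom-derivations, and
`Δ(a) = α⁻¹(a)▷r − s◁β⁻¹(a)` is a covariant BiHom-derivation w.r.t. `(δ_r, δ_s)`. -/
theorem stmt11 {K A : Type*} [Field K] [NonUnitalNonAssocRing A] [Module K A]
    [SMulCommClass K A A] [IsScalarTower K A A]
    (α β : A ≃ₗ[K] A) (ψ ω : A →ₗ[K] A) (r s : A ⊗[K] A)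
    -- BiHom-associative algebra axioms for (A, ·, α, β)
    (hαmul : ∀ a b, α (a * b) = α a * α b)
    (hβmul : ∀ a b, β (a * b) = β a * β b)
    (hassoc : ∀ a b c, α a * (b * c) = (a * b) * β c)
    -- ψ, ω multiplicative
    (hψmul : ∀ a b, ψ (a * b) = ψ a * ψ b)
    (hωmul : ∀ a b, ω (a * b) = ω a * ω b)
    -- α, β, ψ, ω pairwise commute
    (hαβ : ∀ a, α (β a) = β (α a)) (hαψ : ∀ a, α (ψ a) = ψ (α a))
    (hαω : ∀ a, α (ω a) = ω (α a)) (hβψ : ∀ a, β (ψ a) = ψ (β a))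
    (hβω : ∀ a, β (ω a) = ω (β a)) (hψω : ∀ a, ψ (ω a) = ω (ψ a))
    -- r, s are α-, β-, ψ-, ω-invariant
    (hrα : TensorProduct.map α.toLinearMap α.toLinearMap r = r)
    (hrβ : TensorProduct.map β.toLinearMap β.toLinearMap r = r)
    (hrψ : TensorProduct.map ψ ψ r = r)
    (hrω : TensorProduct.map ω ω r = r)
    (hsα : TensorProduct.map α.toLinearMap α.toLinearMap s = s)
    (hsβ : TensorProduct.map β.toLinearMap β.toLinearMap s = s)
    (hsψ : TensorProduct.map ψ ψ s = s)
    (hsω : TensorProduct.map ω ω s = s) :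
    -- δ_r is a BiHom-derivation
    ((∀ a, TensorProduct.map α.toLinearMap α.toLinearMap (deltaOp α β ψ ω r r a) =
        deltaOp α β ψ ω r r (α a)) ∧
     (∀ a, TensorProduct.map β.toLinearMap β.toLinearMap (deltaOp α β ψ ω r r a) =
        deltaOp α β ψ ω r r (β a)) ∧
     (∀ a, TensorProduct.map ψ ψ (deltaOp α β ψ ω r r a) = deltaOp α β ψ ω r r (ψ a)) ∧
     (∀ a, TensorProduct.map ω ω (deltaOp α β ψ ω r r a) = deltaOp α β ψ ω r r (ω a)) ∧
     (∀ a b, deltaOp α β ψ ω r r (a * b) =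
        lT2 β.toLinearMap ω a (deltaOp α β ψ ω r r b) +
          rT2 α.toLinearMap ψ b (deltaOp α β ψ ω r r a))) ∧
    -- δ_s is a BiHom-derivation
    ((∀ a, TensorProduct.map α.toLinearMap α.toLinearMap (deltaOp α β ψ ω s s a) =
        deltaOp α β ψ ω s s (α a)) ∧
     (∀ a, TensorProduct.map β.toLinearMap β.toLinearMap (deltaOp α β ψ ω s s a) =
        deltaOp α β ψ ω s s (β a)) ∧
     (∀ a, TensorProduct.map ψ ψ (deltaOp α β ψ ω s s a) = deltaOp α β ψ ω s s (ψ a)) ∧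
     (∀ a, TensorProduct.map ω ω (deltaOp α β ψ ω s s a) = deltaOp α β ψ ω s s (ω a)) ∧
     (∀ a b, deltaOp α β ψ ω s s (a * b) =
        lT2 β.toLinearMap ω a (deltaOp α β ψ ω s s b) +
          rT2 α.toLinearMap ψ b (deltaOp α β ψ ω s s a))) ∧
    -- Δ is a covariant BiHom-derivation with respect to (δ_r, δ_s)
    (∀ a b, deltaOp α β ψ ω r s (a * b) =
      rT2 α.toLinearMap ψ b (deltaOp α β ψ ω r s a) +
        lT2 β.toLinearMap ω a (deltaOp α β ψ ω r r b)) ∧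
    (∀ a b, deltaOp α β ψ ω r s (a * b) =
      lT2 β.toLinearMap ω a (deltaOp α β ψ ω r s b) +
        rT2 α.toLinearMap ψ b (deltaOp α β ψ ω s s a)) := by
  have hδ {t : A ⊗[K] A} := isBiHomDerivation_deltaOp (r := t)
    hαmul hβmul hassoc hψmul hωmul hαβ hαψ hαω hβψ hβω hψω
  have hδr := hδ hrα hrβ hrψ hrω
  have hδs := hδ hsα hsβ hsψ hsω
  have hΔ := deltaOp_mul hαmul hβmul hassoc hψmul hωmul hαω hβψ hrβ hsα
  exact ⟨⟨hδr.map_alpha, hδr.map_beta, hδr.map_psi, hδr.map_omega, hδr.leibniz⟩,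
    ⟨hδs.map_alpha, hδs.map_beta, hδs.map_psi, hδs.map_omega, hδs.leibniz⟩,
    fun a b => (hΔ r a b).trans (add_comm _ _), hΔ s⟩
end

section
/- Let (A, μ, R, α, β) be a Rota-Baxter BiHom-associative algebra of weight λ, and define operations a≺b = aR(b) and a≻b = R(a)b + λab for all a, b ∈ A. Then (A, ≺, ≻, α, β) is a BiHom-dendriform algebra. -/
/-- `a ≺ b = a·R(b)`. -/
def precOp {K A : Type*} [Field K] [NonUnitalNonAssocRing A] [Module K A]
    [SMulCommClass K A A] [IsScalarTower K A A]
    (R : A →ₗ[K] A) (a b : A) : A :=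
  a * R b

/-- `a ≻ b = R(a)·b + λ·a·b`. -/
def succOp {K A : Type*} [Field K] [NonUnitalNonAssocRing A] [Module K A]
    [SMulCommClass K A A] [IsScalarTower K A A]
    (R : A →ₗ[K] A) (lam : K) (a b : A) : A :=
  R a * b + lam • (a * b)

/-!
Set `P = R + λ id`. Then `a ≺ b = a R(b)`, `a ≻ b = P(a) b`, and the Rota-Baxter identity says that
both `P` and `R` are multiplicative from the product `a ∗ b = a ≺ b + a ≻ b` to the original one:
`P(a) P(b) = P(a ∗ b)` and `R(a) R(b) = R(a ∗ b)`. Each dendriform axiom is therefore a single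
instance of BiHom-associativity, followed by one of these two identities or by none.
-/

section Definitions

variable {K A : Type*} [CommSemiring K]

/-- The axioms of a BiHom-associative algebra with structure maps `α`, `β`. Bilinearity of the
product and linearity of `α`, `β` are left to the types these maps are given. -/
structure IsBiHomAssociative_s15 [Mul A] (α β : A → A) : Prop where
  commute : Function.Commute α β
  alpha_mul : ∀ a b, α (a * b) = α a * α b
  beta_mul : ∀ a b, β (a * b) = β a * β b
  assoc : ∀ a b c, α a * (b * c) = (a * b) * β c

/-- The axioms of a BiHom-dendriform algebra with operations `prec` for `≺` and `succ` for `≻`,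
both bundled as bilinear maps, and structure maps `α`, `β`. -/
structure IsBiHomDendriform [AddCommMonoid A] [Module K A]
    (prec succ : A →ₗ[K] A →ₗ[K] A) (α β : A →ₗ[K] A) : Prop where
  commute : Function.Commute α β
  alpha_prec : ∀ a b, α (prec a b) = prec (α a) (α b)
  alpha_succ : ∀ a b, α (succ a b) = succ (α a) (α b)
  beta_prec : ∀ a b, β (prec a b) = prec (β a) (β b)
  beta_succ : ∀ a b, β (succ a b) = succ (β a) (β b)
  prec_prec : ∀ a b c, prec (prec a b) (β c) = prec (α a) (prec b c) + prec (α a) (succ b c)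
  succ_prec : ∀ a b c, prec (succ a b) (β c) = succ (α a) (prec b c)
  succ_succ : ∀ a b c, succ (α a) (succ b c) = succ (prec a b) (β c) + succ (succ a b) (β c)

variable [NonUnitalNonAssocSemiring A] [Module K A]

/-- `R` is a Rota-Baxter operator of weight `lam`. Commutation with the structure maps of a
BiHom-associative algebra is not included and is assumed separately. -/
structure IsRotaBaxterOperator (R : A →ₗ[K] A) (lam : K) : Prop where
  map_mul_map : ∀ a b, R a * R b = R (R a * b) + R (a * R b) + lam • R (a * b)

/-- `(P, Q)` is a Rota-Baxter system in the sense of Brzeziński: both maps are multiplicative from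
the product `P a * b + a * Q b` to the original one. It separates the two roles that a Rota-Baxter
operator plays in the dendriform axioms. -/
structure IsRotaBaxterSystem (P Q : A →ₗ[K] A) : Prop where
  left_mul_left : ∀ a b, P a * P b = P (P a * b + a * Q b)
  right_mul_right : ∀ a b, Q a * Q b = Q (P a * b + a * Q b)

end Definitions

theorem commute_add_smul_id {K A : Type*} [CommSemiring K] [AddCommMonoid A] [Module K A]
    {R α : A →ₗ[K] A} (h : Function.Commute R α) (lam : K) :
    Function.Commute (R + lam • LinearMap.id : A →ₗ[K] A) α := fun a =>
  show R (α a) + lam • α a = α (R a + lam • a) by rw [h a, map_add, map_smul]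

section RotaBaxter

variable {K A : Type*} [CommSemiring K] [NonUnitalNonAssocSemiring A] [Module K A]
  [SMulCommClass K A A] [IsScalarTower K A A] {P Q R α β : A →ₗ[K] A} {lam : K}

theorem IsRotaBaxterSystem.isBiHomDendriform (hPQ : IsRotaBaxterSystem P Q)
    (hA : IsBiHomAssociative_s15 α β)
    (hPα : Function.Commute P α) (hPβ : Function.Commute P β)
    (hQα : Function.Commute Q α) (hQβ : Function.Commute Q β) :
    IsBiHomDendriform ((LinearMap.mul K A).compl₂ Q) (LinearMap.mul K A ∘ₗ P) α β where
  commute := hA.commute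
  alpha_prec a b := show α (a * Q b) = α a * Q (α b) by rw [hA.alpha_mul, hQα b]
  alpha_succ a b := show α (P a * b) = P (α a) * α b by rw [hA.alpha_mul, hPα a]
  beta_prec a b := show β (a * Q b) = β a * Q (β b) by rw [hA.beta_mul, hQβ b]
  beta_succ a b := show β (P a * b) = P (β a) * β b by rw [hA.beta_mul, hPβ a]
  prec_prec a b c := calc
    a * Q b * Q (β c) = α a * (Q b * Q c) := by rw [hQβ c, hA.assoc]
    _ = α a * Q (b * Q c) + α a * Q (P b * c) := by
      rw [hPQ.right_mul_right, map_add, mul_add, add_comm]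
  succ_prec a b c := show P a * b * Q (β c) = P (α a) * (b * Q c) by
    rw [hQβ c, hPα a, hA.assoc]
  succ_succ a b c := calc
    P (α a) * (P b * c) = P a * P b * β c := by rw [hPα a, hA.assoc]
    _ = P (a * Q b) * β c + P (P a * b) * β c := by
      rw [hPQ.left_mul_left, map_add, add_mul, add_comm]

theorem IsRotaBaxterOperator.isRotaBaxterSystem (hR : IsRotaBaxterOperator R lam) :
    IsRotaBaxterSystem (R + lam • LinearMap.id) R := by
  have map_star (a b : A) : R a * R b = R ((R a + lam • a) * b + a * R b) := by
    rw [hR.map_mul_map, add_mul, smul_mul_assoc, map_add, map_add, map_smul]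
    abel
  refine ⟨fun a b => ?_, map_star⟩
  calc (R a + lam • a) * (R b + lam • b)
      = R a * R b + lam • ((R a + lam • a) * b + a * R b) := by
        simp only [add_mul, mul_add, smul_add, smul_mul_assoc, mul_smul_comm]
        abel
    _ = R ((R a + lam • a) * b + a * R b) + lam • ((R a + lam • a) * b + a * R b) := by
        rw [map_star]

theorem mul_comp_add_smul_id (R : A →ₗ[K] A) (lam : K) :
    LinearMap.mul K A ∘ₗ (R + lam • LinearMap.id) =
      LinearMap.mul K A ∘ₗ R + lam • LinearMap.mul K A := by
  rw [LinearMap.comp_add, LinearMap.comp_smul, LinearMap.comp_id]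

theorem stmt15_general (hA : IsBiHomAssociative_s15 α β) (hR : IsRotaBaxterOperator R lam)
    (hRα : Function.Commute R α) (hRβ : Function.Commute R β) :
    IsBiHomDendriform ((LinearMap.mul K A).compl₂ R)
      (LinearMap.mul K A ∘ₗ R + lam • LinearMap.mul K A) α β := by
  rw [← mul_comp_add_smul_id]
  exact hR.isRotaBaxterSystem.isBiHomDendriform hA (commute_add_smul_id hRα lam)
    (commute_add_smul_id hRβ lam) hRα hRβ

end RotaBaxter

/-- Corollary 3.3: if `(A, μ, R, α, β)` is a Rota-Baxter
BiHom-associative algebra of weight `λ`, then `(A, ≺, ≻, α, β)` with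
`a ≺ b = aR(b)` and `a ≻ b = R(a)b + λab` is a BiHom-dendriform algebra. -/
theorem stmt15 {K A : Type*} [Field K] [NonUnitalNonAssocRing A] [Module K A]
    [SMulCommClass K A A] [IsScalarTower K A A]
    (α β R : A →ₗ[K] A) (lam : K)
    -- BiHom-associative algebra axioms for (A, ·, α, β)
    (hαβ : ∀ a, α (β a) = β (α a))
    (hαmul : ∀ a b, α (a * b) = α a * α b)
    (hβmul : ∀ a b, β (a * b) = β a * β b)
    (hassoc : ∀ a b c, α a * (b * c) = (a * b) * β c)
    -- Rota-Baxter operator of weight λ commuting with α and β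
    (hRα : ∀ a, R (α a) = α (R a)) (hRβ : ∀ a, R (β a) = β (R a))
    (hRB : ∀ a b, R a * R b = R (R a * b) + R (a * R b) + lam • R (a * b)) :
    (∀ a b, α (precOp R a b) = precOp R (α a) (α b)) ∧
    (∀ a b, α (succOp R lam a b) = succOp R lam (α a) (α b)) ∧
    (∀ a b, β (precOp R a b) = precOp R (β a) (β b)) ∧
    (∀ a b, β (succOp R lam a b) = succOp R lam (β a) (β b)) ∧
    (∀ a b c, precOp R (precOp R a b) (β c) =
      precOp R (α a) (precOp R b c) + precOp R (α a) (succOp R lam b c)) ∧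
    (∀ a b c, precOp R (succOp R lam a b) (β c) = succOp R lam (α a) (precOp R b c)) ∧
    (∀ a b c, succOp R lam (α a) (succOp R lam b c) =
      succOp R lam (precOp R a b) (β c) + succOp R lam (succOp R lam a b) (β c)) := by
  have h := stmt15_general ⟨hαβ, hαmul, hβmul, hassoc⟩ ⟨hRB⟩ hRα hRβ
  exact ⟨h.alpha_prec, h.alpha_succ, h.beta_prec, h.beta_succ, h.prec_prec, h.succ_prec,
    h.succ_succ⟩
end

section
/- Let (A, μ, R, α, β) be a Rota-Baxter BiHom-associative algebra of weight λ such that α and β are bijective, and define a⋆b = R(a)b + λab − α⁻¹β(b)·R(αβ⁻¹(a)) for all a, b ∈ A. Then (A, ⋆, α, β) is a BiHom-pre-Lie algebra. -/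
/-- `a ⋆ b = R(a)b + λab − α⁻¹β(b)·R(αβ⁻¹(a))`. -/
def starOp {K A : Type*} [Field K] [NonUnitalNonAssocRing A] [Module K A]
    [SMulCommClass K A A] [IsScalarTower K A A]
    (α β : A ≃ₗ[K] A) (R : A →ₗ[K] A) (lam : K) (a b : A) : A :=
  R a * b + lam • (a * b) - α.symm (β b) * R (α (β.symm a))

/-!
Twisting the product of `A` by `α⁻¹` and `β⁻¹` gives an honest associative product `x · y`, for
which `R` is still a Rota-Baxter operator, and `⋆` is the twist by `α` and `β` of the classical
operation `x ⊛ y = R x · y + λ (x · y) - y · R x`. Since Yau twists preserve the pre-Lie condition,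
it is enough that `⊛` is left pre-Lie. With `P = R + λ` one has `x ⊛ z = P x · z - z · R x`, and `P`
and `R` both carry the commutator of `⊛` to that of `·`, so the left `⊛`-multiplications satisfy
`[L x, L y] = L (x ⊛ y - y ⊛ x)`.
-/

section BiHom

variable {K A : Type*} [CommRing K] [AddCommGroup A] [Module K A]

/-- BiHom-algebras: `α` and `β` are commuting endomorphisms of the bilinear product `m`. This is the
part common to BiHom-associative and BiHom-pre-Lie algebras. -/
structure IsBiHomAlgebra (m : A →ₗ[K] A →ₗ[K] A) (α β : A →ₗ[K] A) : Prop where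
  commute : Function.Commute α β
  map_left : ∀ a b, α (m a b) = m (α a) (α b)
  map_right : ∀ a b, β (m a b) = m (β a) (β b)

/-- BiHom-associative algebras, as a property of a bilinear product `m` and structure maps `α`, `β`.
Usual associativity is the case where `α` and `β` are the identity. -/
structure IsBiHomAssociative_s16 (m : A →ₗ[K] A →ₗ[K] A) (α β : A →ₗ[K] A) : Prop
    extends IsBiHomAlgebra m α β where
  assoc : ∀ a b c, m (α a) (m b c) = m (m a b) (β c)

/-- BiHom-pre-Lie algebras, as a property of a bilinear product `m` and structure maps `α`, `β`.
Left pre-Lie algebras are the case where `α` and `β` are the identity. -/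
structure IsBiHomPreLie (m : A →ₗ[K] A →ₗ[K] A) (α β : A →ₗ[K] A) : Prop
    extends IsBiHomAlgebra m α β where
  leftSymm : ∀ a b c,
    m (α (β a)) (m (α b) c) - m (m (β a) (α b)) (β c) =
      m (α (β b)) (m (α a) c) - m (m (β b) (α a)) (β c)

/-- Rota-Baxter operators of weight `lam` for a bilinear product `m`. Compatibility with structure
maps is not part of the notion. -/
def IsRotaBaxter (m : A →ₗ[K] A →ₗ[K] A) (R : A →ₗ[K] A) (lam : K) : Prop :=
  ∀ a b, m (R a) (R b) = R (m (R a) b) + R (m a (R b)) + lam • R (m a b)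

/-- The product `x ⊛ y = R x · y + λ (x · y) - y · R x`, which is left pre-Lie when `R` is a
Rota-Baxter operator of weight `λ` on an associative algebra. -/
def rotaBaxterStar (m : A →ₗ[K] A →ₗ[K] A) (R : A →ₗ[K] A) (lam : K) : A →ₗ[K] A →ₗ[K] A :=
  m ∘ₗ R + lam • m - m.flip ∘ₗ R

/-- The BiHom analogue `a ⋆ b = R a · b + λ (a · b) - α⁻¹ (β b) · R (α (β⁻¹ a))` of
`rotaBaxterStar`, as a bilinear map; `starOp` is the case where `m` is a multiplication over a
field. -/
def biHomStar (m : A →ₗ[K] A →ₗ[K] A) (α β : A ≃ₗ[K] A) (R : A →ₗ[K] A) (lam : K) :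
    A →ₗ[K] A →ₗ[K] A :=
  m ∘ₗ R + lam • m - m.flip.compl₁₂ (R ∘ₗ (β.symm.trans α : A →ₗ[K] A))
    (β.trans α.symm : A →ₗ[K] A)

theorem commute_symm_right {f : A → A} {e : A ≃ₗ[K] A} (h : Function.Commute f e) :
    Function.Commute f e.symm :=
  Function.Semiconj.inverses_right h e.right_inv e.left_inv

theorem symm_map_bilin {m : A →ₗ[K] A →ₗ[K] A} {e : A ≃ₗ[K] A}
    (h : ∀ a b, e (m a b) = m (e a) (e b)) (a b : A) :
    e.symm (m a b) = m (e.symm a) (e.symm b) := by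
  rw [LinearEquiv.symm_apply_eq, h, e.apply_symm_apply, e.apply_symm_apply]

section Twist

variable {m : A →ₗ[K] A →ₗ[K] A} {α β γ δ R : A →ₗ[K] A} {lam : K}

theorem IsBiHomAlgebra.compl₁₂ (h : IsBiHomAlgebra m α β)
    (hαγ : Function.Commute α γ) (hαδ : Function.Commute α δ)
    (hβγ : Function.Commute β γ) (hβδ : Function.Commute β δ) :
    IsBiHomAlgebra (m.compl₁₂ γ δ) α β where
  commute := h.commute
  map_left a b := by simp only [LinearMap.compl₁₂_apply, h.map_left, hαγ.eq, hαδ.eq]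
  map_right a b := by simp only [LinearMap.compl₁₂_apply, h.map_right, hβγ.eq, hβδ.eq]

theorem IsBiHomAlgebra.twist (h : IsBiHomAlgebra m α β) (g : IsBiHomAlgebra m γ δ)
    (hγα : Function.Commute γ α) (hγβ : Function.Commute γ β)
    (hδα : Function.Commute δ α) (hδβ : Function.Commute δ β) :
    IsBiHomAlgebra (m.compl₁₂ γ δ) (γ ∘ₗ α) (δ ∘ₗ β) where
  commute a := by
    simp only [LinearMap.comp_apply, g.commute.eq, hγα.eq, hγβ.eq, hδα.eq, hδβ.eq, h.commute.eq]
  map_left a b := by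
    simp only [LinearMap.comp_apply, LinearMap.compl₁₂_apply, h.map_left, g.map_left, g.commute.eq,
      hγα.eq, hδα.eq]
  map_right a b := by
    simp only [LinearMap.comp_apply, LinearMap.compl₁₂_apply, h.map_right, g.map_right,
      g.commute.eq, hγβ.eq, hδβ.eq]

theorem IsBiHomAssociative_s16.twist (h : IsBiHomAssociative_s16 m α β) (g : IsBiHomAlgebra m γ δ)
    (hγα : Function.Commute γ α) (hγβ : Function.Commute γ β)
    (hδα : Function.Commute δ α) (hδβ : Function.Commute δ β) :
    IsBiHomAssociative_s16 (m.compl₁₂ γ δ) (γ ∘ₗ α) (δ ∘ₗ β) where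
  toIsBiHomAlgebra := h.toIsBiHomAlgebra.twist g hγα hγβ hδα hδβ
  assoc a b c := by
    simp only [LinearMap.comp_apply, LinearMap.compl₁₂_apply, g.map_left, g.map_right,
      g.commute.eq, hγα.eq, hδβ.eq, h.assoc]

theorem IsBiHomPreLie.twist (h : IsBiHomPreLie m α β) (g : IsBiHomAlgebra m γ δ)
    (hγα : Function.Commute γ α) (hγβ : Function.Commute γ β)
    (hδα : Function.Commute δ α) (hδβ : Function.Commute δ β) :
    IsBiHomPreLie (m.compl₁₂ γ δ) (γ ∘ₗ α) (δ ∘ₗ β) where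
  toIsBiHomAlgebra := h.toIsBiHomAlgebra.twist g hγα hγβ hδα hδβ
  leftSymm a b c := by
    simpa only [LinearMap.comp_apply, LinearMap.compl₁₂_apply, g.map_left, g.map_right,
      g.commute.eq, hγα.eq, hγβ.eq, hδα.eq, hδβ.eq]
      using h.leftSymm (δ (γ (γ a))) (δ (γ (γ b))) (δ (δ c))

theorem IsRotaBaxter.twist (h : IsRotaBaxter m R lam) (hRγ : Function.Commute R γ)
    (hRδ : Function.Commute R δ) : IsRotaBaxter (m.compl₁₂ γ δ) R lam := by
  intro a b
  simpa only [LinearMap.compl₁₂_apply, hRγ.eq, hRδ.eq] using h (γ a) (δ b)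

end Twist

section Equiv

variable {m : A →ₗ[K] A →ₗ[K] A} {α β : A ≃ₗ[K] A}

theorem IsBiHomAlgebra.symm (h : IsBiHomAlgebra m (α : A →ₗ[K] A) β) :
    IsBiHomAlgebra m (α.symm : A →ₗ[K] A) β.symm where
  commute := commute_symm_right (commute_symm_right (f := β) h.commute.symm).symm
  map_left := symm_map_bilin h.map_left
  map_right := symm_map_bilin h.map_right

theorem IsBiHomAlgebra.untwist (h : IsBiHomAlgebra m (α : A →ₗ[K] A) β) :
    IsBiHomAlgebra (m.compl₁₂ (α.symm : A →ₗ[K] A) (β.symm : A →ₗ[K] A)) (α : A →ₗ[K] A) β :=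
  h.compl₁₂ (commute_symm_right (.refl α)) (commute_symm_right h.commute)
    (commute_symm_right h.commute.symm) (commute_symm_right (.refl β))

theorem IsBiHomAssociative_s16.untwist (h : IsBiHomAssociative_s16 m (α : A →ₗ[K] A) β) :
    IsBiHomAssociative_s16 (m.compl₁₂ (α.symm : A →ₗ[K] A) (β.symm : A →ₗ[K] A))
      LinearMap.id LinearMap.id := by
  have twisted := h.twist h.toIsBiHomAlgebra.symm
    (commute_symm_right (.refl α)).symm (commute_symm_right h.commute.symm).symm
    (commute_symm_right h.commute).symm (commute_symm_right (.refl β)).symm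
  simpa only [LinearEquiv.symm_comp] using twisted

end Equiv

section RotaBaxterStar

variable {m : A →ₗ[K] A →ₗ[K] A} {R : A →ₗ[K] A} {lam : K}

theorem rotaBaxterStar_apply (x y : A) :
    rotaBaxterStar m R lam x y = m (R x) y + lam • m x y - m y (R x) :=
  rfl

theorem rotaBaxterStar_eq_sub (x y : A) :
    rotaBaxterStar m R lam x y = m (R x + lam • x) y - m y (R x) := by
  simp only [rotaBaxterStar_apply, map_add, map_smul, LinearMap.add_apply, LinearMap.smul_apply]

theorem IsRotaBaxter.map_commutator (hR : IsRotaBaxter m R lam) (x y : A) :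
    R (rotaBaxterStar m R lam x y - rotaBaxterStar m R lam y x) =
      m (R x) (R y) - m (R y) (R x) := by
  simp only [rotaBaxterStar_apply, map_add, map_sub, map_smul, hR x y, hR y x]
  abel

theorem IsRotaBaxter.map_add_smul_commutator (hR : IsRotaBaxter m R lam) (x y : A) :
    R (rotaBaxterStar m R lam x y - rotaBaxterStar m R lam y x) +
        lam • (rotaBaxterStar m R lam x y - rotaBaxterStar m R lam y x) =
      m (R x + lam • x) (R y + lam • y) - m (R y + lam • y) (R x + lam • x) := by
  rw [hR.map_commutator]
  simp only [rotaBaxterStar_apply, map_add, map_smul, LinearMap.add_apply, LinearMap.smul_apply]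
  module

theorem IsRotaBaxter.commutator_rotaBaxterStar (hR : IsRotaBaxter m R lam)
    (hm : ∀ x y z, m x (m y z) = m (m x y) z) (x y z : A) :
    rotaBaxterStar m R lam (rotaBaxterStar m R lam x y - rotaBaxterStar m R lam y x) z =
      rotaBaxterStar m R lam x (rotaBaxterStar m R lam y z) -
        rotaBaxterStar m R lam y (rotaBaxterStar m R lam x z) := by
  rw [rotaBaxterStar_eq_sub _ z, hR.map_add_smul_commutator, hR.map_commutator]
  simp only [rotaBaxterStar_eq_sub _ z, rotaBaxterStar_eq_sub _ (_ - _), map_sub,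
    LinearMap.sub_apply, hm]
  abel

theorem IsRotaBaxter.isBiHomPreLie_rotaBaxterStar (hR : IsRotaBaxter m R lam)
    (hm : ∀ x y z, m x (m y z) = m (m x y) z) :
    IsBiHomPreLie (rotaBaxterStar m R lam) LinearMap.id LinearMap.id where
  commute := .refl _
  map_left _ _ := rfl
  map_right _ _ := rfl
  leftSymm x y z := by
    have h := hR.commutator_rotaBaxterStar hm x y z
    rw [map_sub, LinearMap.sub_apply] at h
    simp only [LinearMap.id_apply]
    rw [sub_eq_sub_iff_sub_eq_sub, h]

theorem map_rotaBaxterStar {f : A →ₗ[K] A} (hf : ∀ a b, f (m a b) = m (f a) (f b))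
    (hRf : Function.Commute R f) (a b : A) :
    f (rotaBaxterStar m R lam a b) = rotaBaxterStar m R lam (f a) (f b) := by
  simp only [rotaBaxterStar_apply, map_add, map_sub, map_smul, hf, hRf.eq]

theorem IsBiHomAlgebra.rotaBaxterStar {α β : A →ₗ[K] A} (h : IsBiHomAlgebra m α β)
    (hRα : Function.Commute R α) (hRβ : Function.Commute R β) :
    IsBiHomAlgebra (rotaBaxterStar m R lam) α β where
  commute := h.commute
  map_left := map_rotaBaxterStar h.map_left hRα
  map_right := map_rotaBaxterStar h.map_right hRβ

end RotaBaxterStar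

section BiHomStar

variable {m : A →ₗ[K] A →ₗ[K] A} {α β : A ≃ₗ[K] A} {R : A →ₗ[K] A} {lam : K}

theorem biHomStar_eq_twist_rotaBaxterStar (hαβ : Function.Commute α β)
    (hRα : Function.Commute R α) (hRβ : Function.Commute R β) :
    biHomStar m α β R lam =
      (rotaBaxterStar (m.compl₁₂ (α.symm : A →ₗ[K] A) (β.symm : A →ₗ[K] A)) R lam).compl₁₂
        (α : A →ₗ[K] A) (β : A →ₗ[K] A) := by
  have hRβ' : Function.Commute R β.symm := commute_symm_right hRβ
  have hαβ' : Function.Commute α β.symm := commute_symm_right hαβ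
  ext a b
  simp [biHomStar, rotaBaxterStar, hRα.eq, hRβ'.eq, hαβ'.eq]

theorem stmt16_general (hm : IsBiHomAssociative_s16 m (α : A →ₗ[K] A) β) (hR : IsRotaBaxter m R lam)
    (hRα : Function.Commute R α) (hRβ : Function.Commute R β) :
    IsBiHomPreLie (biHomStar m α β R lam) (α : A →ₗ[K] A) β := by
  let m₀ := m.compl₁₂ (α.symm : A →ₗ[K] A) (β.symm : A →ₗ[K] A)
  have hR₀ : IsRotaBaxter m₀ R lam :=
    hR.twist (commute_symm_right hRα) (commute_symm_right hRβ)
  have preLie : IsBiHomPreLie (rotaBaxterStar m₀ R lam) LinearMap.id LinearMap.id :=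
    hR₀.isBiHomPreLie_rotaBaxterStar hm.untwist.assoc
  have endos : IsBiHomAlgebra (rotaBaxterStar m₀ R lam) (α : A →ₗ[K] A) β :=
    hm.toIsBiHomAlgebra.untwist.rotaBaxterStar hRα hRβ
  rw [biHomStar_eq_twist_rotaBaxterStar hm.commute hRα hRβ]
  exact preLie.twist endos .id_right .id_right .id_right .id_right

end BiHomStar

end BiHom

/-- Proposition 3.5: if `(A, μ, R, α, β)` is a Rota-Baxter
BiHom-associative algebra of weight `λ` with `α, β` bijective, then
`a ⋆ b = R(a)b + λab − α⁻¹β(b)R(αβ⁻¹(a))` makes `(A, ⋆, α, β)` a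
BiHom-pre-Lie algebra. -/
theorem stmt16 {K A : Type*} [Field K] [NonUnitalNonAssocRing A] [Module K A]
    [SMulCommClass K A A] [IsScalarTower K A A]
    (α β : A ≃ₗ[K] A) (R : A →ₗ[K] A) (lam : K)
    -- BiHom-associative algebra axioms for (A, ·, α, β)
    (hαβ : ∀ a, α (β a) = β (α a))
    (hαmul : ∀ a b, α (a * b) = α a * α b)
    (hβmul : ∀ a b, β (a * b) = β a * β b)
    (hassoc : ∀ a b c, α a * (b * c) = (a * b) * β c)
    -- Rota-Baxter operator of weight λ commuting with α and β
    (hRα : ∀ a, R (α a) = α (R a)) (hRβ : ∀ a, R (β a) = β (R a))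
    (hRB : ∀ a b, R a * R b = R (R a * b) + R (a * R b) + lam • R (a * b)) :
    (∀ a b, α (starOp α β R lam a b) = starOp α β R lam (α a) (α b)) ∧
    (∀ a b, β (starOp α β R lam a b) = starOp α β R lam (β a) (β b)) ∧
    (∀ a b c,
      starOp α β R lam (α (β a)) (starOp α β R lam (α b) c) -
        starOp α β R lam (starOp α β R lam (β a) (α b)) (β c) =
      starOp α β R lam (α (β b)) (starOp α β R lam (α a) c) -
        starOp α β R lam (starOp α β R lam (β b) (α a)) (β c)) := by
  have h : IsBiHomPreLie (biHomStar (LinearMap.mul K A) α β R lam) (α : A →ₗ[K] A) β :=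
    stmt16_general ⟨⟨hαβ, hαmul, hβmul⟩, hassoc⟩ hRB hRα hRβ
  exact ⟨h.map_left, h.map_right, h.leftSymm⟩
end

section
/- Let (A, μ, R, α_A, β_A) be a Rota-Baxter BiHom-associative algebra of weight λ with α_A, β_A bijective, and let (M, R, T, α_M, β_M, α_A, β_A) be a Rota-Baxter paired left (A, μ, α_A, β_A)-module of weight λ with underlying action ▷. Define a⋆b = R(a)b + λab − α_A⁻¹β_A(b)·R(α_Aβ_A⁻¹(a)) and a▷⋆m = R(a)▷m + a▷T(m) + λ·a▷m. Then (M, ▷⋆, α_M, β_M) is a left pre-Lie module over the BiHom-pre-Lie algebra (A, ⋆, α_A, β_A). -/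
/-- `a ▷⋆ m = R(a)▷m + a▷T(m) + λ·a▷m`. -/
def actStar {K A M : Type*} [Field K] [NonUnitalNonAssocRing A] [Module K A]
    [SMulCommClass K A A] [IsScalarTower K A A] [AddCommGroup M] [Module K M]
    (act : A →ₗ[K] M →ₗ[K] M) (R : A →ₗ[K] A) (T : M →ₗ[K] M) (lam : K)
    (a : A) (m : M) : M :=
  act (R a) m + act a (T m) + lam • act a m

/-!
The twisted action `a ▷⋆ m = R(a) ▷ m + a ▷ T(m) + λ a ▷ m` satisfies `T(a ▷⋆ m) = R(a) ▷ T(m)`.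
Twisting the multiplication in the same way gives the double product
`a ∘ b = R(a)b + aR(b) + λab`, and `▷⋆` is a BiHom-module action for it:
`α(a) ▷⋆ (b ▷⋆ m) = (a ∘ b) ▷⋆ β(m)`. In `β(a) ⋆ α(b)` the inverses of `α` and `β` cancel, and it
differs from `β(a) ∘ α(b)` by `β(a)R(α(b)) + β(b)R(α(a))`, which is symmetric in `a` and `b`; this
symmetry is the pre-Lie module identity.
-/

section Twist

variable {K A M : Type*} [CommSemiring K] [AddCommMonoid A] [Module K A]
  [AddCommMonoid M] [Module K M]

/-- The twist `▷⋆` of a bilinear action by a pair of operators `R`, `T` of weight `lam`, as a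
bilinear map. With `M = A` and `T = R` it also twists a multiplication, see `doubleProduct`. -/
def rotaBaxterTwist (act : A →ₗ[K] M →ₗ[K] M) (R : A →ₗ[K] A) (T : M →ₗ[K] M) (lam : K) :
    A →ₗ[K] M →ₗ[K] M :=
  act ∘ₗ R + act.compl₂ T + lam • act

variable {act : A →ₗ[K] M →ₗ[K] M} {R : A →ₗ[K] A} {T : M →ₗ[K] M} {lam : K}

theorem rotaBaxterTwist_apply (a : A) (m : M) :
    rotaBaxterTwist act R T lam a m = act (R a) m + act a (T m) + lam • act a m :=
  rfl

theorem map_rotaBaxterTwist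
    (hpair : ∀ a m, act (R a) (T m) =
      T (act (R a) m) + T (act a (T m)) + lam • T (act a m))
    (a : A) (m : M) :
    T (rotaBaxterTwist act R T lam a m) = act (R a) (T m) := by
  rw [hpair, rotaBaxterTwist_apply, map_add, map_add, map_smul]

theorem rotaBaxterTwist_equivariant {φ : A → A} {ψ : M →ₗ[K] M}
    (hact : ∀ a m, ψ (act a m) = act (φ a) (ψ m))
    (hR : ∀ a, R (φ a) = φ (R a)) (hT : ∀ m, T (ψ m) = ψ (T m)) (a : A) (m : M) :
    ψ (rotaBaxterTwist act R T lam a m) = rotaBaxterTwist act R T lam (φ a) (ψ m) := by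
  simp only [rotaBaxterTwist_apply, map_add, map_smul, hact, hR, hT]

end Twist

section DoubleProduct

variable {K A M : Type*} [CommSemiring K] [NonUnitalNonAssocSemiring A] [Module K A]
  [AddCommMonoid M] [Module K M] {α : A → A} {βM : M → M} {R : A →ₗ[K] A} {T : M →ₗ[K] M}
  {lam : K} {act : A →ₗ[K] M →ₗ[K] M}

theorem act_rotaBaxterTwist
    (hact : ∀ a b m, act (α a) (act b m) = act (a * b) (βM m))
    (hTβ : ∀ m, T (βM m) = βM (T m)) (a b : A) (m : M) :
    act (α a) (rotaBaxterTwist act R T lam b m) =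
      act (a * R b) (βM m) + act (a * b) (T (βM m)) + lam • act (a * b) (βM m) := by
  simp only [rotaBaxterTwist_apply, map_add, map_smul, hact, hTβ]

variable [SMulCommClass K A A] [IsScalarTower K A A]

/-- The double product `a ∘ b = R(a)b + aR(b) + λab` of a Rota-Baxter operator `R` of weight `lam`:
the twist of the multiplication, regarded as the action of `A` on itself. -/
def doubleProduct (R : A →ₗ[K] A) (lam : K) : A →ₗ[K] A →ₗ[K] A :=
  rotaBaxterTwist (LinearMap.mul K A) R R lam

theorem doubleProduct_apply (a b : A) :
    doubleProduct R lam a b = R a * b + a * R b + lam • (a * b) :=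
  rfl

theorem map_doubleProduct
    (hRB : ∀ a b, R a * R b = R (R a * b) + R (a * R b) + lam • R (a * b)) (a b : A) :
    R (doubleProduct R lam a b) = R a * R b :=
  map_rotaBaxterTwist (act := LinearMap.mul K A) hRB a b

theorem rotaBaxterTwist_rotaBaxterTwist
    (hRα : ∀ a, R (α a) = α (R a))
    (hRB : ∀ a b, R a * R b = R (R a * b) + R (a * R b) + lam • R (a * b))
    (hact : ∀ a b m, act (α a) (act b m) = act (a * b) (βM m))
    (hTβ : ∀ m, T (βM m) = βM (T m))
    (hpair : ∀ a m, act (R a) (T m) =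
      T (act (R a) m) + T (act a (T m)) + lam • T (act a m))
    (a b : A) (m : M) :
    rotaBaxterTwist act R T lam (α a) (rotaBaxterTwist act R T lam b m) =
      rotaBaxterTwist act R T lam (doubleProduct R lam a b) (βM m) := by
  have hR : act (R (α a)) (rotaBaxterTwist act R T lam b m) =
      act (R (doubleProduct R lam a b)) (βM m) + act (R a * b) (T (βM m)) +
        lam • act (R a * b) (βM m) := by
    rw [hRα, act_rotaBaxterTwist hact hTβ, map_doubleProduct hRB]
  have hT : act (α a) (T (rotaBaxterTwist act R T lam b m)) = act (a * R b) (T (βM m)) := by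
    rw [map_rotaBaxterTwist hpair, hact, hTβ]
  rw [rotaBaxterTwist_apply, hR, hT, act_rotaBaxterTwist hact hTβ, rotaBaxterTwist_apply]
  simp only [doubleProduct_apply, map_add, map_smul, LinearMap.add_apply, LinearMap.smul_apply,
    smul_add]
  abel

end DoubleProduct

section PreLie

variable {K A M : Type*} [CommSemiring K] [NonUnitalNonAssocRing A] [Module K A]
  [SMulCommClass K A A] [IsScalarTower K A A] [AddCommGroup M] [Module K M]
  {α β : A → A} {R : A →ₗ[K] A} {lam : K} {act : A →ₗ[K] M →ₗ[K] M} {T : M →ₗ[K] M}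
  {star : A → A → A}

theorem rotaBaxterTwist_associator {βM : M → M}
    (hRα : ∀ a, R (α a) = α (R a))
    (hRB : ∀ a b, R a * R b = R (R a * b) + R (a * R b) + lam • R (a * b))
    (hact : ∀ a b m, act (α a) (act b m) = act (a * b) (βM m))
    (hTβ : ∀ m, T (βM m) = βM (T m))
    (hpair : ∀ a m, act (R a) (T m) =
      T (act (R a) m) + T (act a (T m)) + lam • T (act a m))
    (hstar : ∀ a b, star (β a) (α b) =
      R (β a) * α b + lam • (β a * α b) - β b * R (α a))
    (a b : A) (m : M) :
    rotaBaxterTwist act R T lam (α (β a)) (rotaBaxterTwist act R T lam (α b) m) -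
        rotaBaxterTwist act R T lam (star (β a) (α b)) (βM m) =
      rotaBaxterTwist act R T lam (β a * R (α b) + β b * R (α a)) (βM m) := by
  have hdouble : doubleProduct R lam (β a) (α b) - star (β a) (α b) =
      β a * R (α b) + β b * R (α a) := by
    rw [doubleProduct_apply, hstar]
    abel
  rw [rotaBaxterTwist_rotaBaxterTwist hRα hRB hact hTβ hpair, ← hdouble, map_sub,
    LinearMap.sub_apply]

theorem stmt17_general {αM βM : M →ₗ[K] M}
    (hRα : ∀ a, R (α a) = α (R a)) (hRβ : ∀ a, R (β a) = β (R a))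
    (hRB : ∀ a b, R a * R b = R (R a * b) + R (a * R b) + lam • R (a * b))
    (hMα : ∀ a m, αM (act a m) = act (α a) (αM m))
    (hMβ : ∀ a m, βM (act a m) = act (β a) (βM m))
    (hMact : ∀ a b m, act (α a) (act b m) = act (a * b) (βM m))
    (hTα : ∀ m, T (αM m) = αM (T m)) (hTβ : ∀ m, T (βM m) = βM (T m))
    (hpair : ∀ a m, act (R a) (T m) =
      T (act (R a) m) + T (act a (T m)) + lam • T (act a m))
    (hstar : ∀ a b, star (β a) (α b) =
      R (β a) * α b + lam • (β a * α b) - β b * R (α a)) :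
    (∀ a m, αM (rotaBaxterTwist act R T lam a m) =
      rotaBaxterTwist act R T lam (α a) (αM m)) ∧
    (∀ a m, βM (rotaBaxterTwist act R T lam a m) =
      rotaBaxterTwist act R T lam (β a) (βM m)) ∧
    (∀ a b m,
      rotaBaxterTwist act R T lam (α (β a)) (rotaBaxterTwist act R T lam (α b) m) -
        rotaBaxterTwist act R T lam (star (β a) (α b)) (βM m) =
      rotaBaxterTwist act R T lam (α (β b)) (rotaBaxterTwist act R T lam (α a) m) -
        rotaBaxterTwist act R T lam (star (β b) (α a)) (βM m)) := by
  refine ⟨rotaBaxterTwist_equivariant hMα hRα hTα, rotaBaxterTwist_equivariant hMβ hRβ hTβ,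
    fun a b m ↦ ?_⟩
  have hassociator := rotaBaxterTwist_associator hRα hRB hMact hTβ hpair hstar
  rw [hassociator, hassociator, add_comm]

end PreLie

section StarOp

variable {K A M : Type*} [Field K] [NonUnitalNonAssocRing A] [Module K A]
  [SMulCommClass K A A] [IsScalarTower K A A] [AddCommGroup M] [Module K M]

theorem actStar_eq_rotaBaxterTwist (act : A →ₗ[K] M →ₗ[K] M) (R : A →ₗ[K] A) (T : M →ₗ[K] M)
    (lam : K) (a : A) (m : M) :
    actStar act R T lam a m = rotaBaxterTwist act R T lam a m :=
  rfl

theorem starOp_apply_apply {α β : A ≃ₗ[K] A} (hαβ : ∀ a, α (β a) = β (α a)) (R : A →ₗ[K] A)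
    (lam : K) (a b : A) :
    starOp α β R lam (β a) (α b) = R (β a) * α b + lam • (β a * α b) - β b * R (α a) := by
  rw [starOp, ← hαβ, α.symm_apply_apply, β.symm_apply_apply]

end StarOp

/-- Theorem 3.11: if `(A, μ, R, α_A, β_A)` is a Rota-Baxter
BiHom-associative algebra of weight `λ` with `α_A, β_A` bijective and
`(M, R, T, α_M, β_M, α_A, β_A)` is a Rota-Baxter paired left module of weight `λ`,
then `a▷⋆m = R(a)▷m + a▷T(m) + λa▷m` makes `(M, ▷⋆, α_M, β_M)` a left pre-Lie
module over the BiHom-pre-Lie algebra `(A, ⋆, α_A, β_A)`. -/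
theorem stmt17 {K A M : Type*} [Field K] [NonUnitalNonAssocRing A] [Module K A]
    [SMulCommClass K A A] [IsScalarTower K A A] [AddCommGroup M] [Module K M]
    (α β : A ≃ₗ[K] A) (R : A →ₗ[K] A) (lam : K)
    (αM βM : M →ₗ[K] M) (act : A →ₗ[K] M →ₗ[K] M) (T : M →ₗ[K] M)
    -- BiHom-associative algebra axioms for (A, ·, α, β)
    (hαβ : ∀ a, α (β a) = β (α a))
    (hαmul : ∀ a b, α (a * b) = α a * α b)
    (hβmul : ∀ a b, β (a * b) = β a * β b)
    (hassoc : ∀ a b c, α a * (b * c) = (a * b) * β c)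
    -- Rota-Baxter operator of weight λ commuting with α and β
    (hRα : ∀ a, R (α a) = α (R a)) (hRβ : ∀ a, R (β a) = β (R a))
    (hRB : ∀ a b, R a * R b = R (R a * b) + R (a * R b) + lam • R (a * b))
    -- (M, ▷, αM, βM) is a left (A, μ, α, β)-module
    (hMcomm : ∀ m, αM (βM m) = βM (αM m))
    (hMα : ∀ a m, αM (act a m) = act (α a) (αM m))
    (hMβ : ∀ a m, βM (act a m) = act (β a) (βM m))
    (hMact : ∀ a b m, act (α a) (act b m) = act (a * b) (βM m))
    -- Rota-Baxter paired module structure of weight λ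
    (hTα : ∀ m, T (αM m) = αM (T m)) (hTβ : ∀ m, T (βM m) = βM (T m))
    (hpair : ∀ a m, act (R a) (T m) =
      T (act (R a) m) + T (act a (T m)) + lam • T (act a m)) :
    (∀ m, αM (βM m) = βM (αM m)) ∧
    (∀ a m, αM (actStar act R T lam a m) = actStar act R T lam (α a) (αM m)) ∧
    (∀ a m, βM (actStar act R T lam a m) = actStar act R T lam (β a) (βM m)) ∧
    (∀ a b m,
      actStar act R T lam (α (β a)) (actStar act R T lam (α b) m) -
        actStar act R T lam (starOp α β R lam (β a) (α b)) (βM m) =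
      actStar act R T lam (α (β b)) (actStar act R T lam (α a) m) -
        actStar act R T lam (starOp α β R lam (β b) (α a)) (βM m)) := by
  simp only [actStar_eq_rotaBaxterTwist]
  exact ⟨hMcomm, stmt17_general hRα hRβ hRB hMα hMβ hMact hTα hTβ hpair
    (starOp_apply_apply hαβ R lam)⟩
end
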